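/- arXiv:1210.3488 — 2 statements merged into one kernel-verified Lean document; each statement's English description precedes it below -/
import Mathlib

section
/- Let R be a commutative ring with 1/2 ∈ R and let A be a unital prime R-algebra containing a nontrivial idempotent e, with f = 1 − e, such that eZ(A)e = Z(eAe) ≠ eAe and fZ(A)f = Z(fAf) ≠ fAf. Then every Lie isomorphism l : A → A is of the standard form: l = m + n, where m : A → A is an injective algebra homomorphism or the negative of an injective algebra anti-homomorphism, and n : A → Z(A) is an R-linear map with n([x, y]) = 0 for all x, y ∈ A. -/
/-!
Transporting `x * y + y * x` along a Lie isomorphism onto `A` yields a second product `B` on `A`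
which is related to the Lie bracket of `A` by the same identities. With respect to the Peirce
decomposition given by `e` and `f = 1 - e`, the identity `⁅w, B x y⁆ = B ⁅w, x⁆ y + B x ⁅w, y⁆`
forces `B a`, for `a` in a corner, to act on the off-diagonal components as multiplication by an
element `g` of that corner. Since the corners are noncommutative and `A` is prime, there is a single
sign such that every `g ∓ a` is central in its corner, so it comes from the center of `A`. Hence
`B u v` agrees modulo the center with `±(T u * T v + T v * T u)`, where `T` is the identity up to a
central-valued linear map `ν`.

The map `m = T ∘ l` thus preserves both the Lie bracket and, up to sign, the Jordan product modulo
the center; so it, or the map `-m` into the opposite algebra, is multiplicative modulo the center.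
A central defect of multiplicativity vanishes because it is a cocycle.
-/

section StandardForm

attribute [local instance] LieRing.ofAssociativeRing

section PrimeRing

/-- A ring is prime if the product of two nonzero two-sided ideals is nonzero, in the elementwise
form: `a A b = 0` only if `a = 0` or `b = 0`. -/
def IsPrimeRing (A : Type*) [Ring A] : Prop :=
  ∀ a b : A, (∀ x, a * x * b = 0) → a = 0 ∨ b = 0

variable {A : Type*} [Ring A]

theorem IsPrimeRing.eq_zero_or_eq_zero_of_mem_center_of_mul_eq_zero (hA : IsPrimeRing A) {z x : A}
    (hz : z ∈ Subring.center A) (h : z * x = 0) : z = 0 ∨ x = 0 :=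
  hA z x fun y ↦ by rw [← Subring.mem_center_iff.1 hz, mul_assoc, h, mul_zero]

theorem IsPrimeRing.mulOpposite (hA : IsPrimeRing A) : IsPrimeRing Aᵐᵒᵖ := by
  intro a b h
  have hab := hA b.unop a.unop fun x ↦ by
    simpa [mul_assoc] using congrArg MulOpposite.unop (h (MulOpposite.op x))
  simpa [or_comm] using hab

theorem mem_center_iff_forall_lie_eq_zero {z : A} :
    z ∈ Subring.center A ↔ ∀ w : A, ⁅z, w⁆ = 0 := by
  simp only [Subring.mem_center_iff, Ring.lie_def, sub_eq_zero, eq_comm (a := z * _)]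

theorem lie_eq_lie_of_sub_mem_center {u v : A} (h : u - v ∈ Subring.center A) (w : A) :
    ⁅w, u⁆ = ⁅w, v⁆ := by
  have hcomm : Commute w (u - v) := Subring.mem_center_iff.1 h w
  rw [← sub_eq_zero, ← lie_sub, hcomm.lie_eq]

theorem invOf_two_mem_center [Invertible (2 : A)] : ⅟(2 : A) ∈ Subring.center A :=
  Set.invOf_mem_center (Set.ofNat_mem_center A 2)

theorem mem_center_of_two_mul_mem_center [Invertible (2 : A)] {z : A}
    (hz : 2 * z ∈ Subring.center A) : z ∈ Subring.center A := by
  simpa using mul_mem invOf_two_mem_center hz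

theorem exists_mem_center_two_mul_eq [Invertible (2 : A)] {z : A} (hz : z ∈ Subring.center A) :
    ∃ y ∈ Subring.center A, 2 * y = z :=
  ⟨⅟2 * z, mul_mem invOf_two_mem_center hz, mul_invOf_cancel_left _ _⟩

end PrimeRing

section Peirce

variable {A : Type*} [Ring A] {p q q' r e f : A}

/-- The Peirce component `pAq` of a ring `A`, for idempotents `p` and `q`. -/
def peirceSpace (p q : A) : AddSubgroup A where
  carrier := {x | p * x = x ∧ x * q = x}
  zero_mem' := by simp
  add_mem' := fun ⟨hpx, hxq⟩ ⟨hpy, hyq⟩ ↦ ⟨by rw [mul_add, hpx, hpy], by rw [add_mul, hxq, hyq]⟩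
  neg_mem' := fun ⟨hpx, hxq⟩ ↦ ⟨by rw [mul_neg, hpx], by rw [neg_mul, hxq]⟩

theorem mul_mem_peirceSpace {x y : A} (hx : x ∈ peirceSpace p q) (hy : y ∈ peirceSpace q' r) :
    x * y ∈ peirceSpace p r :=
  ⟨by rw [← mul_assoc, hx.1], by rw [mul_assoc, hy.2]⟩

theorem center_mul_mem_peirceSpace {z x : A} (hz : z ∈ Subring.center A)
    (hx : x ∈ peirceSpace p q) : z * x ∈ peirceSpace p q :=
  ⟨by rw [← mul_assoc, Subring.mem_center_iff.1 hz, mul_assoc, hx.1], by rw [mul_assoc, hx.2]⟩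

theorem mul_mul_mem_peirceSpace (hp : IsIdempotentElem p) (hq : IsIdempotentElem q) (u : A) :
    p * u * q ∈ peirceSpace p q :=
  ⟨by rw [← mul_assoc, ← mul_assoc, hp.eq], by rw [mul_assoc, hq.eq]⟩

theorem lie_mem_peirceSpace {a b : A} (ha : a ∈ peirceSpace p p) (hb : b ∈ peirceSpace p p) :
    ⁅a, b⁆ ∈ peirceSpace p p :=
  sub_mem (mul_mem_peirceSpace ha hb) (mul_mem_peirceSpace hb ha)

theorem mul_eq_zero_of_mem_peirceSpace {x y : A} (hx : x ∈ peirceSpace p q)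
    (hy : y ∈ peirceSpace q' r) (hq : q * q' = 0) : x * y = 0 := by
  rw [← hx.2, ← hy.1, mul_assoc, ← mul_assoc q, hq, zero_mul, mul_zero]

theorem mem_range_mul_mul_iff_mem_peirceSpace (hp : IsIdempotentElem p) {x : A} :
    x ∈ Set.range (fun a ↦ p * a * p) ↔ x ∈ peirceSpace p p := by
  constructor
  · rintro ⟨a, rfl⟩
    exact mul_mul_mem_peirceSpace hp hp a
  · rintro ⟨hpx, hxp⟩
    exact ⟨x, by simp only [hpx, hxp]⟩

theorem commute_of_mem_peirceSpace {a : A} (ha : a ∈ peirceSpace p p) : Commute p a :=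
  ha.1.trans ha.2.symm

theorem commute_mul_mem_peirceSpace {d x : A} (hd : Commute e d)
    (hx : x ∈ peirceSpace e f) : d * x ∈ peirceSpace e f :=
  ⟨by rw [← mul_assoc, hd.eq, mul_assoc, hx.1], by rw [mul_assoc, hx.2]⟩

/-- Two idempotents `e` and `f = 1 - e`, in a form that is symmetric in `e` and `f`. -/
structure IsComplementaryIdempotents (e f : A) : Prop where
  isIdempotentElem : IsIdempotentElem e
  add_eq_one : e + f = 1

namespace IsComplementaryIdempotents

theorem right_eq (h : IsComplementaryIdempotents e f) : f = 1 - e :=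
  eq_sub_of_add_eq' h.add_eq_one

theorem symm (h : IsComplementaryIdempotents e f) : IsComplementaryIdempotents f e where
  isIdempotentElem := h.right_eq ▸ h.isIdempotentElem.one_sub
  add_eq_one := by rw [add_comm, h.add_eq_one]

theorem mul_eq_zero (h : IsComplementaryIdempotents e f) : e * f = 0 := by
  rw [h.right_eq, h.isIdempotentElem.mul_one_sub_self]

theorem left_mem_peirceSpace (h : IsComplementaryIdempotents e f) : e ∈ peirceSpace e e :=
  ⟨h.isIdempotentElem.eq, h.isIdempotentElem.eq⟩

theorem commute_symm (h : IsComplementaryIdempotents e f) {d : A} (hd : Commute e d) :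
    Commute f d :=
  h.right_eq ▸ (Commute.one_left d).sub_left hd

theorem commute_of_mem_peirceSpace_right (h : IsComplementaryIdempotents e f) {b : A}
    (hb : b ∈ peirceSpace f f) : Commute e b :=
  h.symm.commute_symm (commute_of_mem_peirceSpace hb)

theorem lie_left_eq_self (h : IsComplementaryIdempotents e f) {x : A} (hx : x ∈ peirceSpace e f) :
    ⁅e, x⁆ = x := by
  have hxe : x * e = 0 :=
    mul_eq_zero_of_mem_peirceSpace hx h.left_mem_peirceSpace h.symm.mul_eq_zero
  rw [Ring.lie_def, hx.1, hxe, sub_zero]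

theorem lie_left_eq_neg (h : IsComplementaryIdempotents e f) {y : A} (hy : y ∈ peirceSpace f e) :
    ⁅e, y⁆ = -y := by
  have hey : e * y = 0 :=
    mul_eq_zero_of_mem_peirceSpace h.left_mem_peirceSpace hy h.mul_eq_zero
  rw [Ring.lie_def, hy.2, hey, zero_sub]

theorem mem_peirceSpace_of_lie_eq_self [Invertible (2 : A)] (h : IsComplementaryIdempotents e f)
    {w : A} (hw : ⁅e, w⁆ = w) : w ∈ peirceSpace e f := by
  rw [Ring.lie_def] at hw
  have e_idem : e * e = e := h.isIdempotentElem
  have ewe : e * w * e = 0 := by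
    linear_combination (norm := noncomm_ring) -e * hw * e + e_idem * w * e - e * w * e_idem
  have we : w * e = 0 := (isUnit_of_invertible (2 : A)).mul_right_eq_zero.1 <| by
    linear_combination (norm := noncomm_ring) -hw * e + ewe - w * e_idem
  constructor
  · rw [← sub_zero (e * w), ← we, hw]
  · rw [h.right_eq, mul_sub, mul_one, we, sub_zero]

theorem eq_corner_add_corner (h : IsComplementaryIdempotents e f) {d : A} (hd : Commute e d) :
    d = e * d * e + f * d * f := by
  rw [hd.eq, (h.commute_symm hd).eq, mul_assoc, mul_assoc, h.isIdempotentElem.eq,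
    h.symm.isIdempotentElem.eq, ← mul_add, h.add_eq_one, mul_one]

theorem corner_add_corner_commute (h : IsComplementaryIdempotents e f) (u : A) :
    Commute e (e * u * e + f * u * f) :=
  (commute_of_mem_peirceSpace
    (mul_mul_mem_peirceSpace h.isIdempotentElem h.isIdempotentElem u)).add_right
    (h.commute_of_mem_peirceSpace_right
      (mul_mul_mem_peirceSpace h.symm.isIdempotentElem h.symm.isIdempotentElem u))

theorem corner_add_corner_eq_zero (h : IsComplementaryIdempotents e f) {x : A}
    (hx : x ∈ peirceSpace e f) : e * x * e + f * x * f = 0 := by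
  rw [hx.1, mul_assoc, hx.2,
    mul_eq_zero_of_mem_peirceSpace hx h.left_mem_peirceSpace h.symm.mul_eq_zero,
    mul_eq_zero_of_mem_peirceSpace h.symm.left_mem_peirceSpace hx h.symm.mul_eq_zero, add_zero]

theorem exists_eq_add_add (h : IsComplementaryIdempotents e f) (u : A) :
    ∃ d x y, Commute e d ∧ x ∈ peirceSpace e f ∧ y ∈ peirceSpace f e ∧ u = d + x + y := by
  refine ⟨e * u * e + f * u * f, e * u * f, f * u * e, h.corner_add_corner_commute u,
    mul_mul_mem_peirceSpace h.isIdempotentElem h.symm.isIdempotentElem u,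
    mul_mul_mem_peirceSpace h.symm.isIdempotentElem h.isIdempotentElem u, ?_⟩
  rw [h.right_eq]
  noncomm_ring

theorem lie_corner_add_eq_sub_mul (h : IsComplementaryIdempotents e f) {a z x : A}
    (ha : a ∈ peirceSpace e e) (hz : z ∈ Subring.center A) (hx : x ∈ peirceSpace e f) :
    ⁅x, a + z * f⁆ = (z - a) * x := by
  have hxa : x * a = 0 := mul_eq_zero_of_mem_peirceSpace hx ha h.symm.mul_eq_zero
  have hfx : f * x = 0 :=
    mul_eq_zero_of_mem_peirceSpace h.symm.left_mem_peirceSpace hx h.symm.mul_eq_zero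
  rw [Ring.lie_def, mul_add, add_mul, hxa, ← mul_assoc, Subring.mem_center_iff.1 hz, mul_assoc,
    hx.2, mul_assoc z f, hfx]
  noncomm_ring

theorem lie_corner_add_eq_mul_sub (h : IsComplementaryIdempotents e f) {a z y : A}
    (ha : a ∈ peirceSpace e e) (hz : z ∈ Subring.center A) (hy : y ∈ peirceSpace f e) :
    ⁅y, a + z * f⁆ = y * (a - z) := by
  have hay : a * y = 0 := mul_eq_zero_of_mem_peirceSpace ha hy h.mul_eq_zero
  have hyf : y * f = 0 :=
    mul_eq_zero_of_mem_peirceSpace hy h.symm.left_mem_peirceSpace h.mul_eq_zero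
  rw [Ring.lie_def, mul_add, add_mul, hay, ← mul_assoc, Subring.mem_center_iff.1 hz, mul_assoc,
    hyf, mul_assoc z f, hy.1, mul_sub, Subring.mem_center_iff.1 hz]
  noncomm_ring

theorem mul_eq_zero_or_mul_eq_zero (h : IsComplementaryIdempotents e f) (hA : IsPrimeRing A)
    {a b : A} (hab : ∀ x ∈ peirceSpace e f, a * x * b = 0) : a * e = 0 ∨ f * b = 0 :=
  hA _ _ fun x ↦ by
    simpa only [mul_assoc] using
      hab _ (mul_mul_mem_peirceSpace h.isIdempotentElem h.symm.isIdempotentElem x)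

theorem mul_left_eq_zero (h : IsComplementaryIdempotents e f) (hA : IsPrimeRing A)
    (hf : f ≠ 0) {a : A} (ha : ∀ x ∈ peirceSpace e f, a * x = 0) : a * e = 0 :=
  (h.mul_eq_zero_or_mul_eq_zero hA (b := f) fun x hx ↦ by rw [ha x hx, zero_mul]).resolve_right
    (h.symm.isIdempotentElem.eq.trans_ne hf)

theorem exists_mem_peirceSpace_ne_zero (h : IsComplementaryIdempotents e f)
    (hA : IsPrimeRing A) (he : e ≠ 0) (hf : f ≠ 0) : ∃ x ∈ peirceSpace e f, x ≠ 0 := by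
  by_contra! hzero
  exact he (h.isIdempotentElem.eq.symm.trans
    (h.mul_left_eq_zero hA hf fun x hx ↦ by rw [hzero x hx, mul_zero]))

theorem mem_center_of_commute (h : IsComplementaryIdempotents e f) (hA : IsPrimeRing A)
    (he : e ≠ 0) (hf : f ≠ 0) {w : A}
    (hx : ∀ x ∈ peirceSpace e f, Commute w x) (hy : ∀ y ∈ peirceSpace f e, Commute w y) :
    w ∈ Subring.center A := by
  have commute_diag {d : A} (hd : Commute e d) : ⁅w, d⁆ = 0 := by
    have lie_mul (x : A) (hwx : Commute w x) (hwdx : Commute w (d * x)) : ⁅w, d⁆ * x = 0 := by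
      rw [Ring.lie_def, sub_mul, mul_assoc, hwdx.eq, mul_assoc, mul_assoc, hwx.eq, sub_self]
    have left : ⁅w, d⁆ * e = 0 := h.mul_left_eq_zero hA hf fun x hxe ↦
      lie_mul x (hx x hxe) (hx _ (commute_mul_mem_peirceSpace hd hxe))
    have right : ⁅w, d⁆ * f = 0 := h.symm.mul_left_eq_zero hA he fun y hye ↦
      lie_mul y (hy y hye) (hy _ (commute_mul_mem_peirceSpace (h.commute_symm hd) hye))
    rw [← mul_one ⁅w, d⁆, ← h.add_eq_one, mul_add, left, right, add_zero]
  refine mem_center_iff_forall_lie_eq_zero.2 fun u ↦ ?_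
  obtain ⟨d, x, y, hd, hxe, hye, rfl⟩ := h.exists_eq_add_add u
  rw [lie_add, lie_add, commute_diag hd, (hx x hxe).lie_eq, (hy y hye).lie_eq, add_zero, add_zero]

end IsComplementaryIdempotents

end Peirce

section CentralCorners

variable {A : Type*} [Ring A] {p e f : A}

/-- The corner ring `pAp` is noncommutative and its center comes from the center of `A`. -/
structure IsCentralCorner (p : A) : Prop where
  exists_mem_center : ∀ a ∈ peirceSpace p p, (∀ a' ∈ peirceSpace p p, Commute a a') →
    ∃ z ∈ Subring.center A, a = z * p
  exists_lie_ne_zero : ∃ a ∈ peirceSpace p p, ∃ a' ∈ peirceSpace p p, ⁅a, a'⁆ ≠ 0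

theorem IsCentralCorner.of_image_center_eq (hp : IsIdempotentElem p)
    (hZ : (fun x ↦ p * x * p) '' (Subring.center A : Set A) =
      {x ∈ Set.range (fun a ↦ p * a * p) | ∀ y ∈ Set.range (fun a ↦ p * a * p), x * y = y * x})
    (hZ' : {x ∈ Set.range (fun a ↦ p * a * p) |
        ∀ y ∈ Set.range (fun a ↦ p * a * p), x * y = y * x} ≠ Set.range (fun a ↦ p * a * p)) :
    IsCentralCorner p where
  exists_mem_center a ha hcomm := by
    obtain ⟨z, hz, rfl⟩ := hZ.symm.subset ⟨(mem_range_mul_mul_iff_mem_peirceSpace hp).2 ha,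
      fun y hy ↦ hcomm y ((mem_range_mul_mul_iff_mem_peirceSpace hp).1 hy)⟩
    exact ⟨z, hz, by simp only [Subring.mem_center_iff.1 hz p, mul_assoc, hp.eq]⟩
  exists_lie_ne_zero := by
    by_contra! hcomm
    refine hZ' (Set.sep_eq_self_iff_mem_true.2 fun a ha y hy ↦ ?_)
    rw [mem_range_mul_mul_iff_mem_peirceSpace hp] at ha hy
    exact commute_iff_lie_eq.2 (hcomm a ha y hy)

theorem IsCentralCorner.ne_zero (hp : IsCentralCorner p) : p ≠ 0 := by
  rintro rfl
  obtain ⟨a, ha, a', -, hne⟩ := hp.exists_lie_ne_zero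
  rw [← ha.1, zero_mul, zero_lie] at hne
  exact hne rfl

/-- Complementary idempotents both of whose corners are noncommutative with center coming from the
center of the whole ring. -/
structure IsCentralPeircePair (e f : A) : Prop extends IsComplementaryIdempotents e f where
  left : IsCentralCorner e
  right : IsCentralCorner f

namespace IsCentralPeircePair

theorem symm (h : IsCentralPeircePair e f) : IsCentralPeircePair f e where
  toIsComplementaryIdempotents := h.toIsComplementaryIdempotents.symm
  left := h.right
  right := h.left

theorem exists_eq_corner_add (h : IsCentralPeircePair e f) {w : A} (hw : Commute e w)
    (hwf : ∀ b ∈ peirceSpace f f, Commute w b) :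
    ∃ a ∈ peirceSpace e e, ∃ z ∈ Subring.center A, w = a + z * f := by
  have hf := h.symm.isIdempotentElem
  obtain ⟨z, hz, hfwf⟩ := h.right.exists_mem_center (f * w * f) (mul_mul_mem_peirceSpace hf hf w)
    fun b hb ↦ by
      have hfb := commute_of_mem_peirceSpace hb
      exact (hfb.mul_left (hwf b hb)).mul_left hfb
  exact ⟨e * w * e, mul_mul_mem_peirceSpace h.isIdempotentElem h.isIdempotentElem w, z, hz,
    hfwf ▸ h.eq_corner_add_corner hw⟩

theorem exists_eq_center_add (h : IsCentralPeircePair e f) {w : A}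
    (hw : ∀ d, Commute e d → Commute w d) :
    ∃ z ∈ Subring.center A, ∃ z' ∈ Subring.center A, w = z * e + z' * f := by
  obtain ⟨a, ha, z', hz', rfl⟩ := h.exists_eq_corner_add (hw e (Commute.refl e)).symm
    fun b hb ↦ hw b (h.commute_of_mem_peirceSpace_right hb)
  obtain ⟨z, hz, rfl⟩ := h.left.exists_mem_center a ha fun a' ha' ↦ by
    have hfa' : Commute f a' := h.commute_symm (commute_of_mem_peirceSpace ha')
    have hz'a' : Commute z' a' := (Subring.mem_center_iff.1 hz' a').symm
    simpa using (hw a' (commute_of_mem_peirceSpace ha')).sub_left (hz'a'.mul_left hfa')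
  exact ⟨z, hz, z', hz', rfl⟩

end IsCentralPeircePair

end CentralCorners

section LieJordanProduct

variable {R L L' : Type*} [CommRing R] [LieRing L] [LieAlgebra R L] [LieRing L'] [LieAlgebra R L']

/-- A bilinear product on a Lie algebra that satisfies the identities relating the product
`x * y + y * x` of an associative algebra to its Lie bracket. -/
structure IsLieJordanProduct (B : L →ₗ[R] L →ₗ[R] L) : Prop where
  symm : ∀ x y : L, B x y = B y x
  lie_apply : ∀ w x y : L, ⁅w, B x y⁆ = B ⁅w, x⁆ y + B x ⁅w, y⁆
  associator : ∀ x y z : L, B (B x y) z - B x (B y z) = ⁅y, ⁅x, z⁆⁆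

namespace IsLieJordanProduct

variable {B : L →ₗ[R] L →ₗ[R] L}

theorem neg (hB : IsLieJordanProduct B) : IsLieJordanProduct (-B) where
  symm x y := by simp only [LinearMap.neg_apply, hB.symm x y]
  lie_apply w x y := by simp only [LinearMap.neg_apply, lie_neg, hB.lie_apply, neg_add]
  associator x y z := by simp [← hB.associator]

theorem transport (hB : IsLieJordanProduct B) (l : L ≃ₗ⁅R⁆ L') :
    IsLieJordanProduct
      ((B.compl₁₂ (l.symm : L' →ₗ[R] L) (l.symm : L' →ₗ[R] L)).compr₂ (l : L →ₗ[R] L')) where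
  symm x y := by simp [hB.symm (l.symm x)]
  lie_apply w x y := l.symm.injective <| by simp [hB.lie_apply, LieEquiv.map_lie]
  associator x y z := l.symm.injective <| by simp [← hB.associator]

theorem cyclic (hB : IsLieJordanProduct B) (u v w : L) :
    ⁅B u v, w⁆ + ⁅B v w, u⁆ + ⁅B w u, v⁆ = 0 := by
  have apply_lie (x y z : L) : B x ⁅y, z⁆ = -B ⁅z, y⁆ x := by
    rw [hB.symm, ← lie_skew, map_neg, LinearMap.neg_apply]
  rw [← lie_skew, ← lie_skew _ u, ← lie_skew _ v, hB.lie_apply, hB.lie_apply, hB.lie_apply,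
    apply_lie, apply_lie, apply_lie]
  abel

end IsLieJordanProduct

end LieJordanProduct

section JordanMul

variable (R A : Type*) [CommRing R] [Ring A] [Algebra R A]

/-- The product `x * y + y * x` as a bilinear map. -/
def jordanMul : A →ₗ[R] A →ₗ[R] A :=
  LinearMap.mul R A + (LinearMap.mul R A).flip

variable {A} in
theorem jordanMul_apply (x y : A) : jordanMul R A x y = x * y + y * x :=
  rfl

theorem isLieJordanProduct_jordanMul : IsLieJordanProduct (jordanMul R A) where
  symm x y := add_comm _ _
  lie_apply w x y := by simp only [jordanMul_apply, Ring.lie_def]; noncomm_ring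
  associator x y z := by simp only [jordanMul_apply, Ring.lie_def]; noncomm_ring

end JordanMul

namespace IsLieJordanProduct

section Peirce

variable {R A : Type*} [CommRing R] [Ring A] [Algebra R A] [Invertible (2 : A)]
  {B : A →ₗ[R] A →ₗ[R] A} {e f : A}

theorem apply_mem_peirceSpace (hB : IsLieJordanProduct B) (h : IsComplementaryIdempotents e f)
    {d x : A} (hd : Commute e d) (hx : x ∈ peirceSpace e f) : B d x ∈ peirceSpace e f :=
  h.mem_peirceSpace_of_lie_eq_self <| by
    rw [hB.lie_apply, hd.lie_eq, h.lie_left_eq_self hx, map_zero, LinearMap.zero_apply, zero_add]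

theorem apply_eq_zero_of_mem_peirceSpace (hB : IsLieJordanProduct B)
    (h : IsComplementaryIdempotents e f) {x x' : A} (hx : x ∈ peirceSpace e f)
    (hx' : x' ∈ peirceSpace e f) : B x x' = 0 := by
  have lie_eq_zero {u : A} (hu : u ∈ peirceSpace e f) : ⁅x', u⁆ = 0 := by
    rw [Ring.lie_def, mul_eq_zero_of_mem_peirceSpace hx' hu h.symm.mul_eq_zero,
      mul_eq_zero_of_mem_peirceSpace hu hx' h.symm.mul_eq_zero, sub_zero]
  have leibniz := hB.lie_apply x' e x
  rwa [lie_eq_zero hx, lie_eq_zero (hB.apply_mem_peirceSpace h (Commute.refl e) hx), map_zero,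
    add_zero, ← lie_skew, h.lie_left_eq_self hx', map_neg, LinearMap.neg_apply, hB.symm,
    zero_eq_neg] at leibniz

theorem exists_apply_left_eq_mul (hB : IsLieJordanProduct B) (h : IsCentralPeircePair e f) :
    ∃ k ∈ Subring.center A, (∀ x ∈ peirceSpace e f, B e x = k * x) ∧
      ∀ y ∈ peirceSpace f e, B e y = k * y := by
  obtain ⟨z, hz, z', hz', hee⟩ := h.exists_eq_center_add (w := B e e) fun d hd ↦ by
    rw [Commute.symm_iff, commute_iff_lie_eq, hB.lie_apply, hd.symm.lie_eq, map_zero, map_zero,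
      LinearMap.zero_apply, add_zero]
  obtain ⟨k, hk, hkz⟩ := exists_mem_center_two_mul_eq (sub_mem hz hz')
  have hze : z * e ∈ peirceSpace e e := center_mul_mem_peirceSpace hz h.left_mem_peirceSpace
  refine ⟨k, hk, fun x hx ↦ ?_, fun y hy ↦ ?_⟩ <;>
    refine (isUnit_of_invertible (2 : A)).mul_left_cancel ?_
  · have leibniz := hB.lie_apply x e e
    rw [hee, h.lie_corner_add_eq_sub_mul hze hz' hx, ← lie_skew, h.lie_left_eq_self hx,
      hB.symm (-x), map_neg, sub_mul, mul_assoc, hx.1] at leibniz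
    linear_combination (norm := noncomm_ring) leibniz - hkz * x
  · have leibniz := hB.lie_apply y e e
    rw [hee, h.lie_corner_add_eq_mul_sub hze hz' hy, ← lie_skew, h.lie_left_eq_neg hy, neg_neg,
      hB.symm y, mul_sub, Subring.mem_center_iff.1 hz', ← mul_assoc, Subring.mem_center_iff.1 hz,
      mul_assoc, hy.2] at leibniz
    linear_combination (norm := noncomm_ring) -leibniz - hkz * y

end Peirce

end IsLieJordanProduct

section Multiplier

variable {R A : Type*} [CommRing R] [Ring A] [Algebra R A]

/-- The product `B a` acts on both off-diagonal Peirce components as multiplication by the element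
`g` of the corner `eAe`. For the product `x * y + y * x` this holds with `g = a`. -/
structure IsMultiplier (e f : A) (B : A →ₗ[R] A →ₗ[R] A) (a g : A) : Prop where
  mem_left : a ∈ peirceSpace e e
  mem_right : g ∈ peirceSpace e e
  apply_left : ∀ x ∈ peirceSpace e f, B a x = g * x
  apply_right : ∀ y ∈ peirceSpace f e, B a y = y * g

variable {B : A →ₗ[R] A →ₗ[R] A} {e f a a' g g' : A}

theorem IsLieJordanProduct.exists_isMultiplier [Invertible (2 : A)] (hB : IsLieJordanProduct B)
    (h : IsCentralPeircePair e f) (ha : a ∈ peirceSpace e e) : ∃ g, IsMultiplier e f B a g := by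
  obtain ⟨k, hk, hkx, hky⟩ := hB.exists_apply_left_eq_mul h
  have hea := commute_of_mem_peirceSpace ha
  obtain ⟨p, hp, r, hr, hpr⟩ := h.exists_eq_corner_add (w := B e a)
    (by rw [commute_iff_lie_eq, hB.lie_apply, lie_self, hea.lie_eq]; simp) fun b hb ↦ by
      have hbe := (h.commute_of_mem_peirceSpace_right hb).symm
      have hba : Commute b a := by
        rw [Commute, SemiconjBy, mul_eq_zero_of_mem_peirceSpace hb ha h.symm.mul_eq_zero,
          mul_eq_zero_of_mem_peirceSpace ha hb h.mul_eq_zero]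
      rw [Commute.symm_iff, commute_iff_lie_eq, hB.lie_apply, hbe.lie_eq, hba.lie_eq]
      simp
  refine ⟨p - r * e - k * a, ha, ?_, fun x hx ↦ ?_, fun y hy ↦ ?_⟩
  · exact sub_mem (sub_mem hp (center_mul_mem_peirceSpace hr h.left_mem_peirceSpace))
      (center_mul_mem_peirceSpace hk ha)
  · have leibniz := hB.lie_apply x e a
    have hxa : ⁅x, a⁆ = -(a * x) := by
      rw [Ring.lie_def, mul_eq_zero_of_mem_peirceSpace hx ha h.symm.mul_eq_zero, zero_sub]
    rw [hpr, h.lie_corner_add_eq_sub_mul hp hr hx, ← lie_skew, h.lie_left_eq_self hx, hxa, map_neg,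
      map_neg, LinearMap.neg_apply, hkx _ (mul_mem_peirceSpace ha hx), hB.symm x] at leibniz
    linear_combination (norm := noncomm_ring) leibniz + r * hx.1
  · have leibniz := hB.lie_apply y e a
    have hya : ⁅y, a⁆ = y * a := by
      rw [Ring.lie_def, mul_eq_zero_of_mem_peirceSpace ha hy h.mul_eq_zero, sub_zero]
    rw [hpr, h.lie_corner_add_eq_mul_sub hp hr hy, ← lie_skew, h.lie_left_eq_neg hy, neg_neg, hya,
      hky _ (mul_mem_peirceSpace hy ha), hB.symm y] at leibniz
    have hyr := Subring.mem_center_iff.1 hr y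
    have hyk := Subring.mem_center_iff.1 hk y
    linear_combination (norm := noncomm_ring) -leibniz + r * hy.2 + hyk * a - hyr + hyr * e

namespace IsMultiplier

theorem neg (hag : IsMultiplier e f B a g) : IsMultiplier e f (-B) a (-g) where
  mem_left := hag.mem_left
  mem_right := neg_mem hag.mem_right
  apply_left x hx := by rw [LinearMap.neg_apply, LinearMap.neg_apply, hag.apply_left x hx, neg_mul]
  apply_right y hy := by
    rw [LinearMap.neg_apply, LinearMap.neg_apply, hag.apply_right y hy, mul_neg]

theorem apply_neg (hag : IsMultiplier e f B a g) : IsMultiplier e f B (-a) (-g) where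
  mem_left := neg_mem hag.mem_left
  mem_right := neg_mem hag.mem_right
  apply_left x hx := by rw [map_neg, LinearMap.neg_apply, hag.apply_left x hx, neg_mul]
  apply_right y hy := by rw [map_neg, LinearMap.neg_apply, hag.apply_right y hy, mul_neg]

theorem eq (hag : IsMultiplier e f B a g) (hag' : IsMultiplier e f B a g') (hA : IsPrimeRing A)
    (h : IsComplementaryIdempotents e f) (hf : f ≠ 0) : g = g' := by
  have hge := h.mul_left_eq_zero hA hf (a := g - g') fun x hx ↦ by
    rw [sub_mul, ← hag.apply_left x hx, ← hag'.apply_left x hx, sub_self]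
  rwa [(sub_mem hag.mem_right hag'.mem_right).2, sub_eq_zero] at hge

theorem lie (hag : IsMultiplier e f B a g) (hB : IsLieJordanProduct B)
    (h : IsComplementaryIdempotents e f) (ha' : a' ∈ peirceSpace e e) :
    IsMultiplier e f B ⁅a', a⁆ ⁅a', g⁆ where
  mem_left := lie_mem_peirceSpace ha' hag.mem_left
  mem_right := lie_mem_peirceSpace ha' hag.mem_right
  apply_left x hx := by
    have lie_eq {u : A} (hu : u ∈ peirceSpace e f) : ⁅a', u⁆ = a' * u := by
      rw [Ring.lie_def, mul_eq_zero_of_mem_peirceSpace hu ha' h.symm.mul_eq_zero, sub_zero]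
    have leibniz := hB.lie_apply a' a x
    rw [lie_eq hx, hag.apply_left x hx, lie_eq (mul_mem_peirceSpace hag.mem_right hx),
      hag.apply_left _ (mul_mem_peirceSpace ha' hx)] at leibniz
    rw [Ring.lie_def a' g]
    linear_combination (norm := noncomm_ring) -leibniz
  apply_right y hy := by
    have lie_eq {u : A} (hu : u ∈ peirceSpace f e) : ⁅a', u⁆ = -(u * a') := by
      rw [Ring.lie_def, mul_eq_zero_of_mem_peirceSpace ha' hu h.mul_eq_zero, zero_sub]
    have leibniz := hB.lie_apply a' a y
    rw [lie_eq hy, hag.apply_right y hy, lie_eq (mul_mem_peirceSpace hy hag.mem_right), map_neg,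
      hag.apply_right _ (mul_mem_peirceSpace hy ha')] at leibniz
    rw [Ring.lie_def a' g]
    linear_combination (norm := noncomm_ring) -leibniz

theorem lie_eq_lie (hag : IsMultiplier e f B a g) (hag' : IsMultiplier e f B a' g')
    (hB : IsLieJordanProduct B) (hA : IsPrimeRing A) (h : IsComplementaryIdempotents e f)
    (hf : f ≠ 0) : ⁅g, a'⁆ = ⁅a, g'⁆ := by
  have neg_lie_mul := (hag.lie hB h hag'.mem_left).apply_neg
  rw [lie_skew, lie_skew] at neg_lie_mul
  exact neg_lie_mul.eq (hag'.lie hB h hag.mem_left) hA h hf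

theorem lie_multiplier_eq (hag : IsMultiplier e f B a g) (hag' : IsMultiplier e f B a' g')
    (hB : IsLieJordanProduct B) (hA : IsPrimeRing A) (h : IsComplementaryIdempotents e f)
    (hf : f ≠ 0) : ⁅g, g'⁆ = ⁅a, a'⁆ := by
  have lie_mem := lie_mem_peirceSpace hag.mem_left hag'.mem_left
  have hlie := h.mul_left_eq_zero hA hf (a := ⁅g, g'⁆ - ⁅a, a'⁆) fun x hx ↦ by
    have associator := hB.associator a x a'
    rw [hag.apply_left x hx, hB.symm x, hag'.apply_left x hx, hB.symm (g * x),
      hag'.apply_left _ (mul_mem_peirceSpace hag.mem_right hx),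
      hag.apply_left _ (mul_mem_peirceSpace hag'.mem_right hx), Ring.lie_def x,
      mul_eq_zero_of_mem_peirceSpace hx lie_mem h.symm.mul_eq_zero] at associator
    rw [Ring.lie_def g]
    linear_combination (norm := noncomm_ring) -associator
  rwa [(sub_mem (lie_mem_peirceSpace hag.mem_right hag'.mem_right) lie_mem).2,
    sub_eq_zero] at hlie

end IsMultiplier

end Multiplier

section CommutatorDichotomy

variable {R A : Type*} [CommRing R] [Ring A] [Algebra R A]
  {B : A →ₗ[R] A →ₗ[R] A} {e f a a' g b b' t x : A}

namespace IsMultiplier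

theorem lie_apply_eq (hag : IsMultiplier e f B a g) (hbt : IsMultiplier f e B b t)
    (hB : IsLieJordanProduct B) (h : IsComplementaryIdempotents e f) (hx : x ∈ peirceSpace e f) :
    ⁅x, B a b⁆ = g * x * b - a * x * t := by
  have hxa : ⁅x, a⁆ = -(a * x) := by
    rw [Ring.lie_def, mul_eq_zero_of_mem_peirceSpace hx hag.mem_left h.symm.mul_eq_zero, zero_sub]
  have hxb : ⁅x, b⁆ = x * b := by
    rw [Ring.lie_def, mul_eq_zero_of_mem_peirceSpace hbt.mem_left hx h.symm.mul_eq_zero, sub_zero]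
  rw [hB.lie_apply, hxa, hxb, map_neg, LinearMap.neg_apply, hB.symm (a * x),
    hbt.apply_right _ (mul_mem_peirceSpace hag.mem_left hx),
    hag.apply_left _ (mul_mem_peirceSpace hx hbt.mem_left), ← mul_assoc, neg_add_eq_sub]

/-- The map `x ↦ ⁅x, B a b⁆` has the shape `x ↦ x * w - w * x`, so it is annihilated by
`φ ↦ φ (a' * x * b') - a' * φ (x * b') - φ (a' * x) * b' + a' * φ x * b'`. -/
theorem lie_mul_mul_lie_eq (hag : IsMultiplier e f B a g) (hbt : IsMultiplier f e B b t)
    (hB : IsLieJordanProduct B) (h : IsComplementaryIdempotents e f) (ha' : a' ∈ peirceSpace e e)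
    (hb' : b' ∈ peirceSpace f f) (hx : x ∈ peirceSpace e f) :
    ⁅a, a'⁆ * x * ⁅b', t⁆ = ⁅g, a'⁆ * x * ⁅b', b⁆ := by
  have lie_x := hag.lie_apply_eq hbt hB h hx
  have lie_xb := hag.lie_apply_eq hbt hB h (mul_mem_peirceSpace hx hb')
  have lie_ax := hag.lie_apply_eq hbt hB h (mul_mem_peirceSpace ha' hx)
  have lie_axb := hag.lie_apply_eq hbt hB h
    (mul_mem_peirceSpace (mul_mem_peirceSpace ha' hx) hb')
  simp only [Ring.lie_def] at *
  linear_combination (norm := noncomm_ring) lie_axb - a' * lie_xb - lie_ax * b' + a' * lie_x * b'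

theorem lie_eq_or_lie_eq_neg [Invertible (2 : A)] (hag : IsMultiplier e f B a g)
    (hbt : IsMultiplier f e B b t) (hB : IsLieJordanProduct B) (hA : IsPrimeRing A)
    (h : IsCentralPeircePair e f) (ha' : a' ∈ peirceSpace e e) (hb' : b' ∈ peirceSpace f f) :
    ⁅g, a'⁆ = ⁅a, a'⁆ ∨ ⁅t, b'⁆ = -⁅b, b'⁆ := by
  have hidem := h.toIsComplementaryIdempotents
  obtain ⟨g₂, hg⟩ := hB.exists_isMultiplier h hag.mem_right
  obtain ⟨g', ha'g'⟩ := hB.exists_isMultiplier h ha'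
  have lie_g₂ : ⁅g₂, a'⁆ = ⁅a, a'⁆ := (hg.lie_eq_lie ha'g' hB hA hidem h.right.ne_zero).trans
    (hag.lie_multiplier_eq ha'g' hB hA hidem h.right.ne_zero)
  have hmul := h.mul_eq_zero_or_mul_eq_zero hA (a := ⁅g, a'⁆ - ⁅a, a'⁆) (b := ⁅t, b'⁆ + ⁅b, b'⁆)
    fun x hx ↦ by
      have star := hag.lie_mul_mul_lie_eq hbt hB hidem ha' hb' hx
      have star₂ := hg.lie_mul_mul_lie_eq hbt hB hidem ha' hb' hx
      rw [lie_g₂] at star₂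
      rw [← lie_skew t, ← lie_skew b]
      linear_combination (norm := noncomm_ring) star - star₂
  rwa [(sub_mem (lie_mem_peirceSpace hag.mem_right ha') (lie_mem_peirceSpace hag.mem_left ha')).2,
    (add_mem (lie_mem_peirceSpace hbt.mem_right hb') (lie_mem_peirceSpace hbt.mem_left hb')).1,
    sub_eq_zero, add_eq_zero_iff_eq_neg] at hmul

end IsMultiplier

/-- On the corner `eAe`, the multiplier of an element differs from it by an element that commutes
with the corner. This holds for `x * y + y * x` and tells that product apart from its negative. -/
def FixesCommutators (e f : A) (B : A →ₗ[R] A →ₗ[R] A) : Prop :=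
  ∀ a g, IsMultiplier e f B a g → ∀ a' ∈ peirceSpace e e, ⁅g, a'⁆ = ⁅a, a'⁆

namespace IsLieJordanProduct

variable [Invertible (2 : A)]

theorem fixesCommutators_or_fixesCommutators_neg (hB : IsLieJordanProduct B) (hA : IsPrimeRing A)
    (h : IsCentralPeircePair e f) : FixesCommutators e f B ∨ FixesCommutators f e (-B) := by
  by_contra! hnot
  simp only [FixesCommutators, not_forall] at hnot
  obtain ⟨⟨a, g, hag, a', ha', hne⟩, b, t, hbt, b', hb', hne'⟩ := hnot
  have hbt_neg := hbt.neg
  rw [neg_neg] at hbt_neg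
  rcases hag.lie_eq_or_lie_eq_neg hbt_neg hB hA h ha' hb' with heq | heq
  · exact hne heq
  · exact hne' (neg_injective (by rw [← heq, neg_lie]))

theorem not_fixesCommutators_neg (hB : IsLieJordanProduct B) (h : IsCentralPeircePair e f)
    (hpos : FixesCommutators e f B) : ¬ FixesCommutators e f (-B) := by
  intro hneg
  obtain ⟨a, ha, a', ha', hne⟩ := h.left.exists_lie_ne_zero
  obtain ⟨g, hag⟩ := hB.exists_isMultiplier h ha
  have neg_lie_eq := hneg a (-g) hag.neg a' ha'
  rw [neg_lie, hpos a g hag a' ha', neg_eq_iff_add_eq_zero, ← two_mul] at neg_lie_eq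
  exact hne ((isUnit_of_invertible (2 : A)).mul_right_eq_zero.1 neg_lie_eq)

theorem fixesCommutators_dichotomy (hB : IsLieJordanProduct B) (hA : IsPrimeRing A)
    (h : IsCentralPeircePair e f) :
    (FixesCommutators e f B ∧ FixesCommutators f e B) ∨
      (FixesCommutators e f (-B) ∧ FixesCommutators f e (-B)) := by
  have hef := hB.fixesCommutators_or_fixesCommutators_neg hA h
  have hfe := hB.fixesCommutators_or_fixesCommutators_neg hA h.symm
  have not_e := hB.not_fixesCommutators_neg h
  have not_f := hB.not_fixesCommutators_neg h.symm
  tauto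

end IsLieJordanProduct

end CommutatorDichotomy

section JordanDefect

variable {R A : Type*} [CommRing R] [Ring A] [Algebra R A]

/-- On the off-diagonal Peirce components, `B d` is the Jordan multiplication by `d + z`, where `z`
is central. -/
structure IsJordanDefect (e f : A) (B : A →ₗ[R] A →ₗ[R] A) (d z : A) : Prop where
  mem_center : z ∈ Subring.center A
  apply_left : ∀ x ∈ peirceSpace e f, B d x = d * x + x * d + 2 * z * x
  apply_right : ∀ y ∈ peirceSpace f e, B d y = d * y + y * d + 2 * z * y

variable {B : A →ₗ[R] A →ₗ[R] A} {e f : A}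

namespace IsJordanDefect

variable {d d' z z' : A}

theorem symm (hd : IsJordanDefect e f B d z) : IsJordanDefect f e B d z :=
  ⟨hd.mem_center, hd.apply_right, hd.apply_left⟩

theorem add (hd : IsJordanDefect e f B d z) (hd' : IsJordanDefect e f B d' z') :
    IsJordanDefect e f B (d + d') (z + z') where
  mem_center := add_mem hd.mem_center hd'.mem_center
  apply_left x hx := by
    rw [map_add, LinearMap.add_apply, hd.apply_left x hx, hd'.apply_left x hx]
    noncomm_ring
  apply_right y hy := by
    rw [map_add, LinearMap.add_apply, hd.apply_right y hy, hd'.apply_right y hy]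
    noncomm_ring

theorem smul (r : R) (hd : IsJordanDefect e f B d z) : IsJordanDefect e f B (r • d) (r • z) where
  mem_center := Set.smul_mem_center r hd.mem_center
  apply_left x hx := by
    rw [map_smul, LinearMap.smul_apply, hd.apply_left x hx]
    simp only [smul_add, smul_mul_assoc, mul_smul_comm]
  apply_right y hy := by
    rw [map_smul, LinearMap.smul_apply, hd.apply_right y hy]
    simp only [smul_add, smul_mul_assoc, mul_smul_comm]

theorem eq [Invertible (2 : A)] (hd : IsJordanDefect e f B d z) (hd' : IsJordanDefect e f B d z')
    (hA : IsPrimeRing A) (h : IsCentralPeircePair e f) : z = z' := by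
  obtain ⟨x, hx, hx0⟩ := h.exists_mem_peirceSpace_ne_zero hA h.left.ne_zero h.right.ne_zero
  have hzx : (z - z') * x = 0 := (isUnit_of_invertible (2 : A)).mul_right_eq_zero.1 <| by
    linear_combination (norm := noncomm_ring) hd'.apply_left x hx - hd.apply_left x hx
  exact sub_eq_zero.1 <| (hA.eq_zero_or_eq_zero_of_mem_center_of_mul_eq_zero
    (sub_mem hd.mem_center hd'.mem_center) hzx).resolve_right hx0

end IsJordanDefect

namespace IsLieJordanProduct

variable [Invertible (2 : A)]

theorem exists_isJordanDefect_of_mem_peirceSpace (hB : IsLieJordanProduct B)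
    (h : IsCentralPeircePair e f) (hfix : FixesCommutators e f B) {a : A}
    (ha : a ∈ peirceSpace e e) : ∃ z, IsJordanDefect e f B a z := by
  obtain ⟨g, hag⟩ := hB.exists_isMultiplier h ha
  obtain ⟨w, hw, hgw⟩ := h.left.exists_mem_center (g - a) (sub_mem hag.mem_right ha) fun a' ha' ↦ by
    rw [commute_iff_lie_eq, sub_lie, hfix a g hag a' ha', sub_self]
  obtain ⟨z, hz, rfl⟩ := exists_mem_center_two_mul_eq hw
  refine ⟨z, hz, fun x hx ↦ ?_, fun y hy ↦ ?_⟩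
  · rw [hag.apply_left x hx, mul_eq_zero_of_mem_peirceSpace hx ha h.symm.mul_eq_zero]
    linear_combination (norm := noncomm_ring) hgw * x + 2 * z * hx.1
  · rw [hag.apply_right y hy, mul_eq_zero_of_mem_peirceSpace ha hy h.mul_eq_zero]
    have hyz := Subring.mem_center_iff.1 hz y
    linear_combination (norm := noncomm_ring) y * hgw + 2 * hyz * e + 2 * z * hy.2

theorem exists_isJordanDefect (hB : IsLieJordanProduct B) (h : IsCentralPeircePair e f)
    (hfe : FixesCommutators e f B) (hff : FixesCommutators f e B) {d : A} (hd : Commute e d) :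
    ∃ z, IsJordanDefect e f B d z := by
  have he := h.isIdempotentElem
  have hf := h.symm.isIdempotentElem
  obtain ⟨z, hz⟩ :=
    hB.exists_isJordanDefect_of_mem_peirceSpace h hfe (mul_mul_mem_peirceSpace he he d)
  obtain ⟨z', hz'⟩ :=
    hB.exists_isJordanDefect_of_mem_peirceSpace h.symm hff (mul_mul_mem_peirceSpace hf hf d)
  exact ⟨z + z', h.eq_corner_add_corner hd ▸ hz.add hz'.symm⟩

theorem exists_linearMap_isJordanDefect (hB : IsLieJordanProduct B) (hA : IsPrimeRing A)
    (h : IsCentralPeircePair e f) (hfe : FixesCommutators e f B) (hff : FixesCommutators f e B) :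
    ∃ ν : A →ₗ[R] A, ∀ u, IsJordanDefect e f B (e * u * e + f * u * f) (ν u) := by
  choose ν hν using fun u : A ↦
    hB.exists_isJordanDefect h hfe hff (h.corner_add_corner_commute u)
  refine ⟨⟨⟨ν, fun u v ↦ (hν (u + v)).eq ?_ hA h⟩, fun r u ↦ (hν (r • u)).eq ?_ hA h⟩, hν⟩
  · have hadd : e * (u + v) * e + f * (u + v) * f =
        e * u * e + f * u * f + (e * v * e + f * v * f) := by noncomm_ring
    exact hadd ▸ (hν u).add (hν v)
  · simpa only [smul_add, mul_smul_comm, smul_mul_assoc, RingHom.id_apply] using (hν u).smul r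

end IsLieJordanProduct

end JordanDefect

section CentralPerturbation

variable {R A : Type*} [CommRing R] [Ring A] [Algebra R A] [Invertible (2 : A)] {e f : A}

theorem IsCentralPeircePair.apply_mem_peirceSpace_mem_center (h : IsCentralPeircePair e f)
    (hA : IsPrimeRing A) {C : A →ₗ[R] A →ₗ[R] A}
    (hcyc : ∀ u v w, ⁅C u v, w⁆ + ⁅C v w, u⁆ + ⁅C w u, v⁆ = 0) (hsymm : ∀ u v, C u v = C v u)
    (hdx : ∀ d x, Commute e d → x ∈ peirceSpace e f → C d x = 0)
    (hdy : ∀ d y, Commute e d → y ∈ peirceSpace f e → C d y = 0)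
    (hxx : ∀ x ∈ peirceSpace e f, C x x = 0) {x y : A} (hx : x ∈ peirceSpace e f)
    (hy : y ∈ peirceSpace f e) : C x y ∈ Subring.center A := by
  obtain ⟨z, hz, z', hz', hxy⟩ := h.exists_eq_center_add (w := C x y) fun d hd ↦ by
    simpa [hdx d x hd hx, hsymm y, hdy d y hd hy, ← commute_iff_lie_eq] using hcyc x y d
  have hze : z * e ∈ peirceSpace e e := center_mul_mem_peirceSpace hz h.left_mem_peirceSpace
  have lie_eq_zero : ⁅x, C x y⁆ = 0 := (isUnit_of_invertible (2 : A)).mul_right_eq_zero.1 <| by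
    have hcyc := hcyc x y x
    rw [hxx x hx, zero_lie, add_zero, hsymm y x, ← two_mul] at hcyc
    rw [← lie_skew, mul_neg, hcyc, neg_zero]
  rw [hxy, h.lie_corner_add_eq_sub_mul hze hz' hx, sub_mul, mul_assoc, hx.1,
    ← sub_mul] at lie_eq_zero
  rcases hA.eq_zero_or_eq_zero_of_mem_center_of_mul_eq_zero (sub_mem hz' hz) lie_eq_zero with
    hzz' | rfl
  · rwa [hxy, ← sub_eq_zero.1 hzz', ← mul_add, h.add_eq_one, mul_one]
  · simp

theorem IsCentralPeircePair.apply_mem_center (h : IsCentralPeircePair e f)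
    (hA : IsPrimeRing A) {C : A →ₗ[R] A →ₗ[R] A}
    (hcyc : ∀ u v w, ⁅C u v, w⁆ + ⁅C v w, u⁆ + ⁅C w u, v⁆ = 0) (hsymm : ∀ u v, C u v = C v u)
    (hdx : ∀ d x, Commute e d → x ∈ peirceSpace e f → C d x = 0)
    (hdy : ∀ d y, Commute e d → y ∈ peirceSpace f e → C d y = 0)
    (hxx : ∀ x ∈ peirceSpace e f, ∀ x' ∈ peirceSpace e f, C x x' = 0)
    (hyy : ∀ y ∈ peirceSpace f e, ∀ y' ∈ peirceSpace f e, C y y' = 0) (u v : A) :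
    C u v ∈ Subring.center A := by
  have hdd {d d' : A} (hd : Commute e d) (hd' : Commute e d') : C d d' ∈ Subring.center A := by
    refine h.mem_center_of_commute hA h.left.ne_zero h.right.ne_zero (fun x hx ↦ ?_) fun y hy ↦ ?_
    · simpa [hdx d' x hd' hx, hsymm x, hdx d x hd hx, ← commute_iff_lie_eq] using hcyc d d' x
    · simpa [hdy d' y hd' hy, hsymm y, hdy d y hd hy, ← commute_iff_lie_eq] using hcyc d d' y
  have hxy {x y : A} (hx : x ∈ peirceSpace e f) (hy : y ∈ peirceSpace f e) :
      C x y ∈ Subring.center A :=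
    h.apply_mem_peirceSpace_mem_center hA hcyc hsymm hdx hdy (fun x hx ↦ hxx x hx x hx) hx hy
  obtain ⟨d, x, y, hd, hx, hy, rfl⟩ := h.exists_eq_add_add u
  obtain ⟨d', x', y', hd', hx', hy', rfl⟩ := h.exists_eq_add_add v
  simp only [map_add, LinearMap.add_apply, hdx d x' hd hx', hdy d y' hd hy', hsymm x d',
    hdx d' x hd' hx, hsymm y d', hdy d' y hd' hy, hxx x hx x' hx', hyy y hy y' hy', hsymm y x',
    add_zero, zero_add]
  exact add_mem (add_mem (hdd hd hd') (hxy hx' hy)) (hxy hx hy')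

variable {B : A →ₗ[R] A →ₗ[R] A}

theorem IsLieJordanProduct.exists_linearMap_vanishing_isJordanDefect (hB : IsLieJordanProduct B)
    (hA : IsPrimeRing A) (h : IsCentralPeircePair e f) (hfe : FixesCommutators e f B)
    (hff : FixesCommutators f e B) :
    ∃ ν : A →ₗ[R] A, (∀ u, ν u ∈ Subring.center A) ∧
      (∀ d, Commute e d → IsJordanDefect e f B d (ν d)) ∧
      (∀ x ∈ peirceSpace e f, ν x = 0) ∧ ∀ y ∈ peirceSpace f e, ν y = 0 := by
  obtain ⟨ν, hν⟩ := hB.exists_linearMap_isJordanDefect hA h hfe hff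
  have hzero : IsJordanDefect e f B 0 0 := ⟨zero_mem _, by simp, by simp⟩
  refine ⟨ν, fun u ↦ (hν u).mem_center, fun d hd ↦ ?_, fun x hx ↦ (hν x).eq ?_ hA h,
    fun y hy ↦ (hν y).eq ?_ hA h⟩
  · have hdefect := hν d
    rwa [← h.eq_corner_add_corner hd] at hdefect
  · rwa [h.corner_add_corner_eq_zero hx]
  · rwa [add_comm, h.symm.corner_add_corner_eq_zero hy]

theorem IsLieJordanProduct.exists_linearMap_apply_sub_mem_center (hB : IsLieJordanProduct B)
    (hA : IsPrimeRing A) (h : IsCentralPeircePair e f) (hfe : FixesCommutators e f B)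
    (hff : FixesCommutators f e B) :
    ∃ T : A →ₗ[R] A, (∀ u, T u - u ∈ Subring.center A) ∧
      ∀ u v, B u v - jordanMul R A (T u) (T v) ∈ Subring.center A := by
  obtain ⟨ν, hν, hdefect, hνx, hνy⟩ := hB.exists_linearMap_vanishing_isJordanDefect hA h hfe hff
  set T : A →ₗ[R] A := LinearMap.id + ν
  have T_apply (u : A) : T u = u + ν u := rfl
  have hT (u : A) : T u - u ∈ Subring.center A := by simpa [T_apply] using hν u
  refine ⟨T, hT, h.apply_mem_center hA (C := B - (jordanMul R A).compl₁₂ T T)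
    (fun u v w ↦ ?_) (fun u v ↦ ?_)
    (fun d x hd hx ↦ ?_) (fun d y hd hy ↦ ?_) (fun x hx x' hx' ↦ ?_) (fun y hy y' hy' ↦ ?_)⟩
  all_goals simp only [LinearMap.sub_apply, LinearMap.compl₁₂_apply]
  · have hcyc := (isLieJordanProduct_jordanMul R A).cyclic (T u) (T v) (T w)
    simp only [lie_eq_lie_of_sub_mem_center (hT _)] at hcyc
    rw [sub_lie, sub_lie, sub_lie]
    linear_combination (norm := abel) hB.cyclic u v w - hcyc
  · rw [hB.symm, (isLieJordanProduct_jordanMul R A).symm]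
  · rw [(hdefect d hd).apply_left x hx, jordanMul_apply, T_apply, T_apply, hνx x hx]
    linear_combination (norm := noncomm_ring) -Subring.mem_center_iff.1 (hν d) x
  · rw [(hdefect d hd).apply_right y hy, jordanMul_apply, T_apply, T_apply, hνy y hy]
    linear_combination (norm := noncomm_ring) -Subring.mem_center_iff.1 (hν d) y
  · rw [hB.apply_eq_zero_of_mem_peirceSpace h.toIsComplementaryIdempotents hx hx', jordanMul_apply,
      T_apply, T_apply, hνx x hx, hνx x' hx', add_zero, add_zero,
      mul_eq_zero_of_mem_peirceSpace hx hx' h.symm.mul_eq_zero,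
      mul_eq_zero_of_mem_peirceSpace hx' hx h.symm.mul_eq_zero, add_zero, sub_zero]
  · rw [hB.apply_eq_zero_of_mem_peirceSpace h.symm.toIsComplementaryIdempotents hy hy',
      jordanMul_apply, T_apply, T_apply, hνy y hy, hνy y' hy', add_zero, add_zero,
      mul_eq_zero_of_mem_peirceSpace hy hy' h.mul_eq_zero,
      mul_eq_zero_of_mem_peirceSpace hy' hy h.mul_eq_zero, add_zero, sub_zero]

end CentralPerturbation

section MultiplicativeModuloCenter

variable {A₁ A : Type*} [Ring A₁] [Ring A]

/-- Associativity makes the defect `E x y = φ (x * y) - φ x * φ y` a cocycle: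
`E x y * φ z - φ x * E y z = E x (y * z) - E (x * y) z`. Commuting this with `φ x` gives
`E x y * ⁅φ x, φ z⁆ = 0`. -/
theorem defect_mul_lie_eq_zero {φ : A₁ →+ A}
    (hφ : ∀ x y, φ (x * y) - φ x * φ y ∈ Subring.center A) (x y z : A₁) :
    (φ (x * y) - φ x * φ y) * ⁅φ x, φ z⁆ = 0 := by
  have comm₁ := Subring.mem_center_iff.1 (hφ (x * y) z) (φ x)
  have comm₂ := Subring.mem_center_iff.1 (hφ x (y * z)) (φ x)
  have comm₃ := Subring.mem_center_iff.1 (hφ x y) (φ x)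
  have comm₄ := Subring.mem_center_iff.1 (hφ y z) (φ x)
  rw [mul_assoc x y z] at comm₁
  rw [Ring.lie_def]
  linear_combination (norm := noncomm_ring) comm₂ - comm₁ - comm₃ * φ z + φ x * comm₄

theorem map_mul_of_map_mul_sub_mem_center {φ : A₁ →+ A} (hA : IsPrimeRing A)
    (hφ : ∀ x y, φ (x * y) - φ x * φ y ∈ Subring.center A)
    (hsurj : ∀ u, ∃ x, u - φ x ∈ Subring.center A) (hne : ∃ u v : A, ⁅u, v⁆ ≠ 0) (x y : A₁) :
    φ (x * y) = φ x * φ y := by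
  have map_mul_of_notMem {x : A₁} (hx : φ x ∉ Subring.center A) : φ (x * y) = φ x * φ y := by
    obtain ⟨w, hw⟩ : ∃ w : A, ⁅φ x, w⁆ ≠ 0 := by
      simpa only [mem_center_iff_forall_lie_eq_zero, not_forall] using hx
    obtain ⟨z, hz⟩ := hsurj w
    rw [lie_eq_lie_of_sub_mem_center hz] at hw
    exact sub_eq_zero.1 ((hA.eq_zero_or_eq_zero_of_mem_center_of_mul_eq_zero (hφ x y)
      (defect_mul_lie_eq_zero hφ x y z)).resolve_right hw)
  obtain ⟨u, v, huv⟩ := hne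
  obtain ⟨x₀, hx₀⟩ := hsurj u
  have hφx₀ : φ x₀ ∉ Subring.center A := fun hmem ↦
    huv (mem_center_iff_forall_lie_eq_zero.1 (by simpa using add_mem hx₀ hmem) v)
  by_cases hx : φ x ∈ Subring.center A
  · -- Neither `φ x₀` nor `φ (x + x₀)` is central, and the defect is additive in `x`.
    have hsum := map_mul_of_notMem (x := x + x₀) <| by rwa [map_add, add_mem_cancel_left hx]
    rw [add_mul, map_add, map_add, add_mul, map_mul_of_notMem hφx₀] at hsum
    exact add_right_cancel hsum
  · exact map_mul_of_notMem hx

theorem injective_of_ker_subset_center {φ : A₁ →+ A} (hA₁ : IsPrimeRing A₁)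
    (hφ : ∀ x y, φ (x * y) = φ x * φ y) (hker : ∀ x, φ x = 0 → x ∈ Subring.center A₁)
    (hne : ∃ x y : A₁, ⁅x, y⁆ ≠ 0) : Function.Injective φ := by
  refine (injective_iff_map_eq_zero φ).2 fun x hx ↦ ?_
  obtain ⟨v, w, hvw⟩ := hne
  have hxv : x * v ∈ Subring.center A₁ := hker _ (by rw [hφ, hx, zero_mul])
  have hx_lie : x * ⁅v, w⁆ = 0 := by
    rw [Ring.lie_def, mul_sub, ← mul_assoc, ← Subring.mem_center_iff.1 hxv, ← mul_assoc,
      ← mul_assoc, Subring.mem_center_iff.1 (hker x hx), sub_self]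
  exact (hA₁.eq_zero_or_eq_zero_of_mem_center_of_mul_eq_zero (hker x hx) hx_lie).resolve_right hvw

end MultiplicativeModuloCenter

section LieIsomorphism

variable (R A : Type*) [CommRing R] [Ring A] [Algebra R A]

/-- A unit `2` of the base ring remains invertible in every algebra over it. -/
abbrev invertibleTwoOfAlgebra [Invertible (2 : R)] : Invertible (2 : A) :=
  (Invertible.map (algebraMap R A) 2).copy 2 (map_ofNat _ 2).symm

/-- The Lie isomorphism `x ↦ -x` onto the opposite algebra, which turns negatives of
anti-homomorphisms into homomorphisms. -/
def negOp : A ≃ₗ⁅R⁆ Aᵐᵒᵖ :=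
  { (LinearEquiv.neg R).trans (MulOpposite.opLinearEquiv R) with
    map_lie' := MulOpposite.unop_injective (by simp [Ring.lie_def]) }

variable {R A}

theorem negOp_mem_center {z : A} (hz : z ∈ Subring.center A) :
    negOp R A z ∈ Subring.center Aᵐᵒᵖ :=
  MulOpposite.op_mem_center_iff.2 (neg_mem hz)

variable {A₁ : Type*} [Ring A₁] [Algebra R A₁]

theorem map_lie_eq_of_sub_mem_center (l : A₁ ≃ₗ⁅R⁆ A) {φ : A₁ → A}
    (hlφ : ∀ x, l x - φ x ∈ Subring.center A) (x y : A₁) : l ⁅x, y⁆ = ⁅φ x, φ y⁆ := by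
  rw [LieEquiv.map_lie, lie_eq_lie_of_sub_mem_center (hlφ y), ← lie_skew,
    lie_eq_lie_of_sub_mem_center (hlφ x), lie_skew]

theorem map_mul_and_injective_of_jordan_modulo_center [Invertible (2 : R)] (hA₁ : IsPrimeRing A₁)
    (hA : IsPrimeRing A) (hne : ∃ u v : A, ⁅u, v⁆ ≠ 0) (l : A₁ ≃ₗ⁅R⁆ A) {φ : A₁ →ₗ[R] A}
    (hlφ : ∀ x, l x - φ x ∈ Subring.center A)
    (hφ : ∀ x y, φ (x * y + y * x) - (φ x * φ y + φ y * φ x) ∈ Subring.center A) :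
    (∀ x y, φ (x * y) = φ x * φ y) ∧ Function.Injective φ := by
  let := invertibleTwoOfAlgebra R A
  have hmul (x y : A₁) : φ (x * y) - φ x * φ y ∈ Subring.center A := by
    refine mem_center_of_two_mul_mem_center ?_
    convert sub_mem (hφ x y) (hlφ ⁅x, y⁆) using 1
    rw [map_lie_eq_of_sub_mem_center l hlφ, Ring.lie_def, Ring.lie_def, map_add, map_sub]
    noncomm_ring
  have φ_mul : ∀ x y, φ (x * y) = φ x * φ y :=
    map_mul_of_map_mul_sub_mem_center (φ := φ.toAddMonoidHom) hA hmul
      (fun u ↦ ⟨l.symm u, by simpa using hlφ (l.symm u)⟩) hne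
  refine ⟨φ_mul, injective_of_ker_subset_center (φ := φ.toAddMonoidHom) hA₁ φ_mul
    (fun x hx ↦ mem_center_iff_forall_lie_eq_zero.2 fun w ↦ ?_) ?_⟩
  · refine l.toLinearEquiv.map_eq_zero_iff.1 ((map_lie_eq_of_sub_mem_center l hlφ x w).trans ?_)
    rw [show φ x = 0 from hx, zero_lie]
  · obtain ⟨u, v, huv⟩ := hne
    refine ⟨l.symm u, l.symm v, fun hzero ↦ huv ?_⟩
    exact l.symm.toLinearEquiv.map_eq_zero_iff.1 ((l.symm.map_lie u v).trans hzero)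

theorem exists_jordan_modulo_center [Invertible (2 : A)] (hA : IsPrimeRing A) {e f : A}
    (h : IsCentralPeircePair e f) (l : A₁ ≃ₗ⁅R⁆ A) :
    ∃ m : A₁ →ₗ[R] A, (∀ x, l x - m x ∈ Subring.center A) ∧
      ((∀ x y, m (x * y + y * x) - (m x * m y + m y * m x) ∈ Subring.center A) ∨
        ∀ x y, m (x * y + y * x) + (m x * m y + m y * m x) ∈ Subring.center A) := by
  have hB := (isLieJordanProduct_jordanMul R A₁).transport l
  set B := ((jordanMul R A₁).compl₁₂ (l.symm : A →ₗ[R] A₁) (l.symm : A →ₗ[R] A₁)).compr₂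
    (l : A₁ →ₗ[R] A)
  have l_jordan (x y : A₁) : l (x * y + y * x) = B (l x) (l y) := by
    simp [B, jordanMul_apply]
  rcases hB.fixesCommutators_dichotomy hA h with ⟨hfe, hff⟩ | ⟨hfe, hff⟩
  · obtain ⟨T, hT, hBT⟩ := hB.exists_linearMap_apply_sub_mem_center hA h hfe hff
    refine ⟨T ∘ₗ (l : A₁ →ₗ[R] A), fun x ↦ by simpa using neg_mem (hT (l x)), .inl fun x y ↦ ?_⟩
    convert add_mem (hT (l (x * y + y * x))) (hBT (l x) (l y)) using 1
    rw [← l_jordan, jordanMul_apply]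
    simp
  · obtain ⟨T, hT, hBT⟩ := hB.neg.exists_linearMap_apply_sub_mem_center hA h hfe hff
    refine ⟨T ∘ₗ (l : A₁ →ₗ[R] A), fun x ↦ by simpa using neg_mem (hT (l x)), .inr fun x y ↦ ?_⟩
    convert sub_mem (hT (l (x * y + y * x))) (hBT (l x) (l y)) using 1
    rw [LinearMap.neg_apply, LinearMap.neg_apply, ← l_jordan, jordanMul_apply]
    simp only [LinearMap.comp_apply, LieEquiv.coe_toLinearEquiv, LinearEquiv.coe_coe]
    abel

theorem exists_injective_homomorphism_or_neg_antihomomorphism [Invertible (2 : R)]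
    (hA₁ : IsPrimeRing A₁) (hA : IsPrimeRing A) {e f : A} (h : IsCentralPeircePair e f)
    (l : A₁ ≃ₗ⁅R⁆ A) :
    ∃ m : A₁ →ₗ[R] A, (∀ x, l x - m x ∈ Subring.center A) ∧ Function.Injective m ∧
      ((∀ x y, m (x * y) = m x * m y) ∨ ∀ x y, m (x * y) = -(m y * m x)) := by
  let := invertibleTwoOfAlgebra R A
  obtain ⟨u, -, v, -, huv⟩ := h.left.exists_lie_ne_zero
  obtain ⟨m, hlm, hm | hm⟩ := exists_jordan_modulo_center hA h l
  · obtain ⟨m_mul, m_inj⟩ :=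
      map_mul_and_injective_of_jordan_modulo_center hA₁ hA ⟨u, v, huv⟩ l hlm hm
    exact ⟨m, hlm, m_inj, .inl m_mul⟩
  · set φ : A₁ →ₗ[R] Aᵐᵒᵖ := (negOp R A : A →ₗ[R] Aᵐᵒᵖ) ∘ₗ m
    have φ_apply (x : A₁) : φ x = MulOpposite.op (-m x) := rfl
    have op_noncomm : ∃ u v : Aᵐᵒᵖ, ⁅u, v⁆ ≠ 0 := ⟨negOp R A u, negOp R A v, by
      rw [← LieEquiv.map_lie]
      exact (negOp R A).toLinearEquiv.map_eq_zero_iff.not.2 huv⟩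
    have hlφ (x : A₁) : l.trans (negOp R A) x - φ x ∈ Subring.center Aᵐᵒᵖ := by
      simpa [φ] using negOp_mem_center (R := R) (hlm x)
    have hφ (x y : A₁) : φ (x * y + y * x) - (φ x * φ y + φ y * φ x) ∈ Subring.center Aᵐᵒᵖ := by
      convert negOp_mem_center (R := R) (hm x y) using 1
      refine MulOpposite.unop_injective ?_
      change -m (x * y + y * x) - (-m y * -m x + -m x * -m y) = -(m (x * y + y * x) + _)
      noncomm_ring
    obtain ⟨φ_mul, φ_inj⟩ :=
      map_mul_and_injective_of_jordan_modulo_center hA₁ hA.mulOpposite op_noncomm _ hlφ hφ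
    refine ⟨m, hlm, fun x y hxy ↦ φ_inj (by rw [φ_apply, φ_apply, hxy]), .inr fun x y ↦ ?_⟩
    simpa [φ_apply, neg_eq_iff_eq_neg] using congrArg MulOpposite.unop (φ_mul x y)

theorem stmt18_general [Invertible (2 : R)] (hA₁ : IsPrimeRing A₁) (hA : IsPrimeRing A) {e f : A}
    (h : IsCentralPeircePair e f) (l : A₁ ≃ₗ⁅R⁆ A) :
    ∃ m nm : A₁ →ₗ[R] A,
      (∀ x, l x = m x + nm x) ∧
      Function.Injective m ∧
      ((∀ x y, m (x * y) = m x * m y) ∨ (∀ x y, m (x * y) = -(m y * m x))) ∧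
      (∀ x, nm x ∈ Subring.center A) ∧
      (∀ x y, nm (x * y - y * x) = 0) := by
  obtain ⟨m, hlm, m_inj, hm⟩ := exists_injective_homomorphism_or_neg_antihomomorphism hA₁ hA h l
  have l_lie (x y : A₁) : l (x * y - y * x) = m x * m y - m y * m x := by
    rw [← Ring.lie_def, ← Ring.lie_def, map_lie_eq_of_sub_mem_center l hlm]
  refine ⟨m, (l : A₁ →ₗ[R] A) - m, fun x ↦ by simp, m_inj, hm, hlm, fun x y ↦ ?_⟩
  rw [LinearMap.sub_apply, sub_eq_zero]
  refine (l_lie x y).trans ?_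
  rcases hm with hm | hm <;> rw [map_sub, hm, hm]
  abel

end LieIsomorphism

end StandardForm

/-- **Corollary 4.9.**  Let `R` be a commutative ring with `1/2 ∈ R` and let `A` be
a unital prime `R`-algebra containing a nontrivial idempotent `e`, with `f = 1 - e`,
such that `e Z(A) e = Z(eAe) ≠ eAe` and `f Z(A) f = Z(fAf) ≠ fAf`.  Then every Lie
isomorphism `l : A → A` is of the standard form `l = m + n`, where `m` is an
injective homomorphism or the negative of an injective anti-homomorphism of `A` and
`n : A → Z(A)` is a linear map vanishing on each commutator. -/
theorem stmt18 (R A : Type*) [CommRing R] [Invertible (2 : R)]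
    [Ring A] [Algebra R A]
    (hprime : ∀ a b : A, (∀ x : A, a * x * b = 0) → a = 0 ∨ b = 0)
    (e : A) (he : e * e = e) (he0 : e ≠ 0) (he1 : e ≠ 1)
    (f : A) (hf : f = 1 - e)
    (hZe : (fun x => e * x * e) '' (Subring.center A : Set A)
            = {x ∈ Set.range (fun a => e * a * e) |
                ∀ y ∈ Set.range (fun a => e * a * e), x * y = y * x})
    (hZe' : {x ∈ Set.range (fun a => e * a * e) |
                ∀ y ∈ Set.range (fun a => e * a * e), x * y = y * x}
            ≠ Set.range (fun a => e * a * e))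
    (hZf : (fun x => f * x * f) '' (Subring.center A : Set A)
            = {x ∈ Set.range (fun a => f * a * f) |
                ∀ y ∈ Set.range (fun a => f * a * f), x * y = y * x})
    (hZf' : {x ∈ Set.range (fun a => f * a * f) |
                ∀ y ∈ Set.range (fun a => f * a * f), x * y = y * x}
            ≠ Set.range (fun a => f * a * f))
    (l : A ≃ₗ[R] A)
    (hLie : ∀ x y : A, l (x * y - y * x) = l x * l y - l y * l x) :
    ∃ m nm : A →ₗ[R] A,
      (∀ x : A, l x = m x + nm x) ∧
      Function.Injective m ∧
      ((∀ x y : A, m (x * y) = m x * m y) ∨ (∀ x y : A, m (x * y) = -(m y * m x))) ∧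
      (∀ x : A, nm x ∈ Subring.center A) ∧
      (∀ x y : A, nm (x * y - y * x) = 0) := by
  have hpair : IsCentralPeircePair e f :=
    { isIdempotentElem := he
      add_eq_one := by rw [hf, add_sub_cancel]
      left := .of_image_center_eq he hZe hZe'
      right := .of_image_center_eq (hf ▸ IsIdempotentElem.one_sub he) hZf hZf' }
  let := LieRing.ofAssociativeRing (A := A)
  exact stmt18_general hprime hprime hpair { l with map_lie' := hLie _ _ }
end

section
/- Let X be a Banach space over the real or complex field F and let B(X) be the algebra of all bounded linear operators on X. Then every Lie isomorphism l : B(X) → B(X) has the standard form: l = m + n, where m : B(X) → B(X) is an algebra isomorphism or the negative of an algebra anti-isomorphism, and n : B(X) → F·I is an F-linear map with n([x, y]) = 0 for all x, y ∈ B(X). -/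
/-!
Let `l` be a Lie isomorphism and `p = ε ⊗ e` an idempotent of rank one. The derivation `D = ⁅p, ·⁆`
satisfies `D³ = D`, hence so does `⁅l p, ·⁆`, which forces `l p` to be an idempotent `q` plus a
scalar. If `D n = n`, then `⁅n, ⁅n, b⁆⁆` is a multiple of `n` for all `b`; transported by `l`, this
forces `q` or `1 - q` to have rank one.

If `q` has rank one, then the operators on `X` and, through `l`, those on `Y` represent the same
Lie algebra so that `p` acts as an idempotent of rank one up to a scalar. The eigenspace of `D` for
`-1` is a copy of the kernel of the corresponding functional in both spaces, which yields a linear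
bijection `T : X → Y`. On each eigenspace of `D`, hence everywhere, `l a` agrees with `T a T⁻¹` up
to a scalar. If `1 - q` has rank one, the same comparison applies to `-p` and the contragredient
representation on the dual of `X`, and the transposition reverses products.
-/

attribute [local instance] LieRing.ofAssociativeRing

/-- A faithful representation of the Lie algebra `L` on `V` whose image contains a full column
`{form ⊗ x | x ∈ V}` of operators of rank one, and in which `p` acts, up to a scalar, as the
idempotent `form ⊗ vec` of rank one. The scalar is irrelevant, as only the inner derivation
`⁅p, ·⁆` matters. -/
structure ColumnRep (F : Type*) {L : Type*} [Field F] [LieRing L] [LieAlgebra F L] (p : L)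
    (V : Type*) [AddCommGroup V] [Module F V] where
  toEnd : L →ₗ⁅F⁆ Module.End F V
  injective : Function.Injective toEnd
  vec : V
  form : Module.Dual F V
  form_vec : form vec = 1
  exists_toEnd_self : ∃ s : F, ∀ y, toEnd p y = form y • vec + s • y
  column : V →ₗ[F] L
  toEnd_column : ∀ x y, toEnd (column x) y = form y • x

namespace ColumnRep

variable {F L V W : Type*} [Field F] [LieRing L] [LieAlgebra F L] {p a : L}
  [AddCommGroup V] [Module F V] [AddCommGroup W] [Module F W]

section Grading

variable (A : ColumnRep F p V)

theorem eq_of_toEnd_apply_eq {b : L} (h : ∀ y, A.toEnd a y = A.toEnd b y) : a = b :=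
  A.injective (LinearMap.ext h)

theorem toEnd_lie_apply (a b : L) (y : V) :
    A.toEnd ⁅a, b⁆ y = A.toEnd a (A.toEnd b y) - A.toEnd b (A.toEnd a y) := by
  rw [LieHom.map_lie, Ring.lie_def, LinearMap.sub_apply, Module.End.mul_apply,
    Module.End.mul_apply]

theorem toEnd_lie_self_apply (a : L) (y : V) :
    A.toEnd ⁅p, a⁆ y = A.form (A.toEnd a y) • A.vec - A.form y • A.toEnd a A.vec := by
  obtain ⟨s, hs⟩ := A.exists_toEnd_self
  simp only [toEnd_lie_apply, hs, map_add, map_smul]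
  abel

theorem lie_lie_lie (A : ColumnRep F p V) (a : L) : ⁅p, ⁅p, ⁅p, a⁆⁆⁆ = ⁅p, a⁆ := by
  refine A.eq_of_toEnd_apply_eq fun y => ?_
  simp only [toEnd_lie_self_apply, map_sub, map_smul, smul_eq_mul, A.form_vec]
  module

theorem lie_column {u : V} (hu : A.form u = 0) : ⁅p, A.column u⁆ = -A.column u := by
  refine A.eq_of_toEnd_apply_eq fun y => ?_
  rw [toEnd_lie_self_apply]
  simp [toEnd_column, hu, A.form_vec]

theorem toEnd_vec_of_lie_eq_zero (ha : ⁅p, a⁆ = 0) :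
    A.toEnd a A.vec = A.form (A.toEnd a A.vec) • A.vec := by
  have h := A.toEnd_lie_self_apply a A.vec
  rw [ha, A.form_vec, one_smul, map_zero, LinearMap.zero_apply] at h
  exact (sub_eq_zero.mp h.symm).symm

theorem form_toEnd_of_lie_eq_zero (ha : ⁅p, a⁆ = 0) (y : V) :
    A.form (A.toEnd a y) = A.form (A.toEnd a A.vec) * A.form y := by
  have h := congrArg A.form (A.toEnd_lie_self_apply a y)
  simp only [ha, map_zero, LinearMap.zero_apply, map_sub, map_smul, smul_eq_mul, A.form_vec] at h
  linear_combination -h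

variable [NeZero (2 : F)]

theorem toEnd_vec_of_lie_eq_self (ha : ⁅p, a⁆ = a) : A.toEnd a A.vec = 0 := by
  have h := A.toEnd_lie_self_apply a A.vec
  rw [ha, A.form_vec, one_smul] at h
  have form_eq_zero : A.form (A.toEnd a A.vec) = 0 := by
    simpa [A.form_vec] using congrArg A.form h
  rw [form_eq_zero, zero_smul, zero_sub, eq_neg_iff_add_eq_zero, ← two_smul F] at h
  exact (smul_eq_zero_iff_right two_ne_zero).mp h

theorem toEnd_apply_of_lie_eq_self (ha : ⁅p, a⁆ = a) (y : V) :
    A.toEnd a y = A.form (A.toEnd a y) • A.vec := by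
  have h := A.toEnd_lie_self_apply a y
  rwa [ha, A.toEnd_vec_of_lie_eq_self ha, smul_zero, sub_zero] at h

theorem toEnd_toEnd_of_lie_eq_self (ha : ⁅p, a⁆ = a) (y : V) : A.toEnd a (A.toEnd a y) = 0 := by
  rw [A.toEnd_apply_of_lie_eq_self ha y, map_smul, A.toEnd_vec_of_lie_eq_self ha, smul_zero]

theorem lie_lie_of_lie_eq_self (ha : ⁅p, a⁆ = a) (b : L) :
    ⁅a, ⁅a, b⁆⁆ = (-2 * A.form (A.toEnd a (A.toEnd b A.vec))) • a := by
  refine A.eq_of_toEnd_apply_eq fun y => ?_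
  have sandwich : A.toEnd a (A.toEnd b (A.toEnd a y)) =
      A.form (A.toEnd a (A.toEnd b A.vec)) • A.toEnd a y := by
    rw [A.toEnd_apply_of_lie_eq_self ha y, map_smul, map_smul,
      A.toEnd_apply_of_lie_eq_self ha (A.toEnd b A.vec)]
    simp only [map_smul, smul_eq_mul, A.form_vec, mul_one]
    module
  simp only [toEnd_lie_apply, map_sub, A.toEnd_toEnd_of_lie_eq_self ha, map_zero, sandwich,
    map_smul, LinearMap.smul_apply]
  module

theorem exists_mul_mul_eq_smul_of_lieEquiv {R : Type*} [Ring R] [Algebra F R]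
    (A : ColumnRep F p V) (l : L ≃ₗ⁅F⁆ R) {n : R} (hn : ⁅l p, n⁆ = n) (sq_zero : n * n = 0)
    (a : R) : ∃ r : F, n * a * n = r • n := by
  obtain ⟨n, rfl⟩ := EquivLike.surjective l n
  obtain ⟨b, rfl⟩ := EquivLike.surjective l a
  have lie_eq_self : ⁅p, n⁆ = n := EquivLike.injective l (by rw [LieEquiv.map_lie, hn])
  refine ⟨A.form (A.toEnd n (A.toEnd b A.vec)), ?_⟩
  have lie_lie := congrArg l (A.lie_lie_of_lie_eq_self lie_eq_self b)
  have expand : ⁅l n, ⁅l n, l b⁆⁆ = (-2 : F) • (l n * l b * l n) := by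
    simp only [Ring.lie_def, mul_sub, sub_mul, ← mul_assoc, sq_zero, zero_mul]
    rw [mul_assoc (l b), sq_zero, mul_zero]
    module
  rw [LieEquiv.map_lie, LieEquiv.map_lie, expand, map_smul, mul_smul] at lie_lie
  exact smul_right_injective _ (neg_ne_zero.mpr two_ne_zero) lie_lie

theorem toEnd_lie_column_apply (ha : ⁅p, a⁆ = a) (u y : V) :
    A.toEnd ⁅a, A.column u⁆ y =
      A.form y • A.form (A.toEnd a u) • A.vec - A.form (A.toEnd a y) • u := by
  rw [toEnd_lie_apply, toEnd_column, toEnd_column, map_smul, ← A.toEnd_apply_of_lie_eq_self ha]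

theorem form_toEnd_of_lie_eq_neg (ha : ⁅p, a⁆ = -a) (y : V) : A.form (A.toEnd a y) = 0 := by
  have h (z : V) := congrArg A.form (A.toEnd_lie_self_apply a z)
  simp only [ha, map_neg, LinearMap.neg_apply, map_sub, map_smul, smul_eq_mul, A.form_vec,
    mul_one] at h
  have h_vec : A.form (A.toEnd a A.vec) = 0 := by
    simpa [A.form_vec] using h A.vec
  refine (mul_eq_zero_iff_left (two_ne_zero (α := F))).mp ?_
  linear_combination -h y + A.form y * h_vec

theorem eq_column_of_lie_eq_neg (ha : ⁅p, a⁆ = -a) : a = A.column (A.toEnd a A.vec) := by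
  refine A.eq_of_toEnd_apply_eq fun y => ?_
  have h := A.toEnd_lie_self_apply a y
  rw [ha, A.form_toEnd_of_lie_eq_neg ha, zero_smul, zero_sub, map_neg, LinearMap.neg_apply,
    neg_inj] at h
  rw [h, toEnd_column]

theorem grading_induction (A : ColumnRep F p V) {P : L → Prop} (add : ∀ a b, P a → P b → P (a + b))
    (lie_eq_zero : ∀ a, ⁅p, a⁆ = 0 → P a) (lie_eq_self : ∀ a, ⁅p, a⁆ = a → P a)
    (lie_eq_neg : ∀ a, ⁅p, a⁆ = -a → P a) (a : L) : P a := by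
  have cube := A.lie_lie_lie a
  have decomp : a = (a - ⁅p, ⁅p, a⁆⁆) + (2⁻¹ : F) • (⁅p, ⁅p, a⁆⁆ + ⁅p, a⁆)
      + (2⁻¹ : F) • (⁅p, ⁅p, a⁆⁆ - ⁅p, a⁆) := by
    have half : (2⁻¹ : F) + 2⁻¹ = 1 := by rw [← two_mul, mul_inv_cancel₀ two_ne_zero]
    linear_combination (norm := module) half • (-⁅p, ⁅p, a⁆⁆)
  rw [decomp]
  refine add _ _ (add _ _ (lie_eq_zero _ ?_) (lie_eq_self _ ?_)) (lie_eq_neg _ ?_)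
  · rw [lie_sub, cube, sub_self]
  · rw [lie_smul, lie_add, cube, add_comm]
  · rw [lie_smul, lie_sub, cube, ← smul_neg, neg_sub]

end Grading

section Transfer

variable (A : ColumnRep F p V) (B : ColumnRep F p W)

theorem ext_vec_ker {f g : V →ₗ[F] W} (h_vec : f A.vec = g A.vec)
    (h_ker : ∀ u, A.form u = 0 → f u = g u) : f = g := by
  ext x
  have h := h_ker (x - A.form x • A.vec) (by simp [A.form_vec])
  simpa [h_vec] using h

/-- The comparison map between two column representations: it sends the distinguished vector to
the distinguished vector, and on the kernel of the form it identifies both spaces with the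
eigenspace of `⁅p, ·⁆` for the eigenvalue `-1`. -/
def transfer : V →ₗ[F] W :=
  A.form.smulRight B.vec + (B.toEnd : L →ₗ[F] Module.End F W).flip B.vec ∘ₗ A.column ∘ₗ
    (LinearMap.id - A.form.smulRight A.vec)

@[simp]
theorem transfer_vec : A.transfer B A.vec = B.vec := by
  simp [transfer, A.form_vec]

theorem transfer_of_form_eq_zero {u : V} (hu : A.form u = 0) :
    A.transfer B u = B.toEnd (A.column u) B.vec := by
  simp [transfer, hu]

/-- The amount by which `transfer` fails to intertwine the actions of `a`. -/
def twist : L →ₗ[F] F :=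
  B.form ∘ₗ (B.toEnd : L →ₗ[F] Module.End F W).flip B.vec -
    A.form ∘ₗ (A.toEnd : L →ₗ[F] Module.End F V).flip A.vec

theorem twist_apply (a : L) :
    A.twist B a = B.form (B.toEnd a B.vec) - A.form (A.toEnd a A.vec) := rfl

theorem toEnd_comp_transfer_of_lie_eq_zero (ha : ⁅p, a⁆ = 0) :
    B.toEnd a ∘ₗ A.transfer B = A.transfer B ∘ₗ A.toEnd a + A.twist B a • A.transfer B := by
  refine A.ext_vec_ker ?_ fun u hu => ?_
  · simp only [LinearMap.comp_apply, LinearMap.add_apply, LinearMap.smul_apply, transfer_vec]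
    rw [A.toEnd_vec_of_lie_eq_zero ha, B.toEnd_vec_of_lie_eq_zero ha, map_smul, transfer_vec,
      twist_apply]
    module
  · set c := A.form (A.toEnd a A.vec) with hc
    have h_form : A.form (A.toEnd a u - c • u) = 0 := by
      rw [map_sub, A.form_toEnd_of_lie_eq_zero ha, map_smul, hu, mul_zero, smul_zero, sub_zero]
    have lie_column_eq : ⁅a, A.column u⁆ = A.column (A.toEnd a u - c • u) := by
      refine A.eq_of_toEnd_apply_eq fun y => ?_
      simp only [toEnd_lie_apply, toEnd_column, map_smul, A.form_toEnd_of_lie_eq_zero ha y, ← hc]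
      module
    have h := A.transfer_of_form_eq_zero B h_form
    rw [← lie_column_eq, toEnd_lie_apply, B.toEnd_vec_of_lie_eq_zero ha, map_smul,
      ← A.transfer_of_form_eq_zero B hu, map_sub, map_smul] at h
    simp only [LinearMap.comp_apply, LinearMap.add_apply, LinearMap.smul_apply, twist_apply, ← hc]
    linear_combination (norm := module) -h

variable [NeZero (2 : F)]

theorem form_comp_transfer : B.form ∘ₗ A.transfer B = A.form := by
  refine A.ext_vec_ker (by simp [A.form_vec, B.form_vec]) fun u hu => ?_
  rw [LinearMap.comp_apply, transfer_of_form_eq_zero A B hu,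
    B.form_toEnd_of_lie_eq_neg (A.lie_column hu), hu]

@[simp]
theorem form_transfer (x : V) : B.form (A.transfer B x) = A.form x :=
  LinearMap.congr_fun (A.form_comp_transfer B) x

theorem column_transfer {u : V} (hu : A.form u = 0) :
    B.column (A.transfer B u) = A.column u := by
  rw [transfer_of_form_eq_zero A B hu, ← B.eq_column_of_lie_eq_neg (A.lie_column hu)]

theorem transfer_comp_transfer : B.transfer A ∘ₗ A.transfer B = LinearMap.id := by
  refine A.ext_vec_ker (by simp) fun u hu => ?_
  rw [LinearMap.comp_apply, B.transfer_of_form_eq_zero A (by simp [hu]), A.column_transfer B hu,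
    toEnd_column, A.form_vec, one_smul, LinearMap.id_apply]

/-- `transfer` as a linear equivalence. -/
def transferEquiv : V ≃ₗ[F] W :=
  .ofLinearMap (A.transfer B) (B.transfer A)
    (B.transfer_comp_transfer A) (A.transfer_comp_transfer B)

theorem toEnd_comp_transfer_of_lie_eq_neg (ha : ⁅p, a⁆ = -a) :
    B.toEnd a ∘ₗ A.transfer B = A.transfer B ∘ₗ A.toEnd a + A.twist B a • A.transfer B := by
  have h_form : A.form (A.toEnd a A.vec) = 0 := A.form_toEnd_of_lie_eq_neg ha _
  have h_twist : A.twist B a = 0 := by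
    rw [twist_apply, h_form, B.form_toEnd_of_lie_eq_neg ha, sub_zero]
  ext x
  rw [h_twist, zero_smul, add_zero, LinearMap.comp_apply, LinearMap.comp_apply,
    A.eq_column_of_lie_eq_neg ha, A.toEnd_column, ← A.column_transfer B h_form, B.toEnd_column,
    form_transfer, map_smul]

theorem form_toEnd_transfer_of_lie_eq_self (ha : ⁅p, a⁆ = a) (x : V) :
    B.form (B.toEnd a (A.transfer B x)) = A.form (A.toEnd a x) := by
  suffices h : B.form ∘ₗ B.toEnd a ∘ₗ A.transfer B = A.form ∘ₗ A.toEnd a from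
    LinearMap.congr_fun h x
  refine A.ext_vec_ker ?_ fun u hu => ?_
  · simp [A.toEnd_vec_of_lie_eq_self ha, B.toEnd_vec_of_lie_eq_self ha]
  · rcases eq_or_ne u 0 with rfl | hu0
    · simp
    set α := A.form (A.toEnd a u) with hα
    set β := B.form (B.toEnd a (A.transfer B u)) with hβ
    -- As `⁅a, column u⁆` commutes with `p`, it is already known to be intertwined, with twist
    -- `β - α`; evaluated at `u` this says `-β = -α + (β - α)`.
    have lie_eq_zero : ⁅p, ⁅a, A.column u⁆⁆ = 0 := by
      rw [leibniz_lie, ha, A.lie_column hu, lie_neg, add_neg_cancel]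
    have actA (y : V) := A.toEnd_lie_column_apply ha u y
    have actB (y : W) := B.toEnd_lie_column_apply ha (A.transfer B u) y
    rw [A.column_transfer B hu] at actB
    have twist_eq : A.twist B ⁅a, A.column u⁆ = β - α := by
      rw [twist_apply, actA, actB]
      simp [A.form_vec, B.form_vec, A.toEnd_vec_of_lie_eq_self ha,
        B.toEnd_vec_of_lie_eq_self ha, ← hα, ← hβ]
    have h := LinearMap.congr_fun (A.toEnd_comp_transfer_of_lie_eq_zero B lie_eq_zero) u
    simp only [LinearMap.comp_apply, LinearMap.add_apply, LinearMap.smul_apply, actA, actB,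
      form_transfer, hu, zero_smul, zero_sub, map_neg, map_smul, twist_eq, ← hα, ← hβ] at h
    have smul_eq_zero : (2 * (β - α)) • A.transfer B u = 0 := by
      linear_combination (norm := module) -h
    have transfer_ne_zero : A.transfer B u ≠ 0 := (A.transferEquiv B).map_ne_zero_iff.mpr hu0
    exact sub_eq_zero.mp ((mul_eq_zero_iff_left two_ne_zero).mp
      ((smul_eq_zero_iff_left transfer_ne_zero).mp smul_eq_zero))

theorem toEnd_comp_transfer_of_lie_eq_self (ha : ⁅p, a⁆ = a) :
    B.toEnd a ∘ₗ A.transfer B = A.transfer B ∘ₗ A.toEnd a + A.twist B a • A.transfer B := by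
  have h_twist : A.twist B a = 0 := by
    simp [twist_apply, A.toEnd_vec_of_lie_eq_self ha, B.toEnd_vec_of_lie_eq_self ha]
  ext x
  rw [h_twist, zero_smul, add_zero, LinearMap.comp_apply, LinearMap.comp_apply,
    A.toEnd_apply_of_lie_eq_self ha, B.toEnd_apply_of_lie_eq_self ha, map_smul, transfer_vec,
    A.form_toEnd_transfer_of_lie_eq_self B ha]

theorem toEnd_transfer (a : L) (x : V) :
    B.toEnd a (A.transfer B x) = A.transfer B (A.toEnd a x) + A.twist B a • A.transfer B x := by
  refine LinearMap.congr_fun (f := B.toEnd a ∘ₗ A.transfer B)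
    (g := A.transfer B ∘ₗ A.toEnd a + A.twist B a • A.transfer B) ?_ x
  refine A.grading_induction (P := fun a => B.toEnd a ∘ₗ A.transfer B =
    A.transfer B ∘ₗ A.toEnd a + A.twist B a • A.transfer B) (fun a b ha hb => ?_)
    (fun _ => A.toEnd_comp_transfer_of_lie_eq_zero B)
    (fun _ => A.toEnd_comp_transfer_of_lie_eq_self B)
    (fun _ => A.toEnd_comp_transfer_of_lie_eq_neg B) a
  simp only [map_add, LinearMap.add_comp, LinearMap.comp_add, add_smul, ha, hb]
  abel

theorem twist_lie (a b : L) : A.twist B ⁅a, b⁆ = 0 := by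
  have h := A.toEnd_transfer B ⁅a, b⁆ A.vec
  rw [A.toEnd_lie_apply, B.toEnd_lie_apply] at h
  simp only [A.toEnd_transfer B, map_add, map_sub, map_smul] at h
  have smul_eq_zero : A.twist B ⁅a, b⁆ • A.transfer B A.vec = 0 := by
    linear_combination (norm := module) -h
  simpa [B.form_vec] using congrArg B.form smul_eq_zero

end Transfer

end ColumnRep

section Operators

variable {F X : Type*} [Field F] [TopologicalSpace F] [AddCommGroup X] [Module F X]
  [TopologicalSpace X]

theorem exists_strongDual_apply_eq [IsTopologicalRing F] [SeparatingDual F X] {ι : Type*}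
    [Finite ι] {v : ι → X} (hv : LinearIndependent F v) (c : ι → F) :
    ∃ f : StrongDual F X, ∀ i, f (v i) = c i := by
  have := Fintype.ofFinite ι
  classical
  obtain ⟨f, hf⟩ := SeparatingDual.dualMap_surjective_iff.mpr
    (hv.fintypeLinearCombination_injective) (Fintype.linearCombination F c)
  refine ⟨f, fun i => ?_⟩
  simpa using LinearMap.congr_fun hf (Pi.single i 1)

variable [ContinuousSMul F X]

theorem exists_linearIndependent_pair_apply {x : X →L[F] X} (hx : ∀ r : F, x ≠ r • 1) :
    ∃ v, LinearIndependent F ![v, x v] := by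
  by_contra! h
  obtain ⟨r, hr⟩ := LinearMap.exists_eq_smul_id_of_forall_notLinearIndependent
    (f := (x : X →ₗ[F] X)) h
  exact hx r (ContinuousLinearMap.coe_injective hr)

/-- Rank-one idempotents `ε ⊗ e`, where `ε e = 1`. -/
def IsRankOneIdempotent (q : X →L[F] X) : Prop :=
  ∃ (e : X) (ε : StrongDual F X), ε e = 1 ∧ q = ε.smulRight e

theorem IsRankOneIdempotent.eq_one_of_eq_smul_one {q : X →L[F] X} (hq : IsRankOneIdempotent q)
    {t : F} (ht : q = t • 1) : q = 1 := by
  obtain ⟨e, ε, hε, rfl⟩ := hq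
  have e_ne_zero : e ≠ 0 := by
    rintro rfl
    simp at hε
  have t_smul_e : t • e = (1 : F) • e := by simpa [hε] using congr($ht e).symm
  rw [ht, smul_left_injective F e_ne_zero t_smul_e, one_smul]

theorem IsRankOneIdempotent.exists_eq_smul_one (h : IsRankOneIdempotent (1 : X →L[F] X))
    (a : X →L[F] X) : ∃ r : F, a = r • 1 := by
  obtain ⟨e, ε, -, one_eq⟩ := h
  have expand (y : X) : y = ε y • e := congr($one_eq y)
  refine ⟨ε (a e), ContinuousLinearMap.ext fun y => ?_⟩
  calc a y = ε y • a e := by rw [← map_smul, ← expand y]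
    _ = ε (a e) • ε y • e := by rw [smul_comm, ← expand (a e)]
    _ = ε (a e) • y := by rw [← expand y]

theorem exists_isRankOneIdempotent [IsTopologicalRing F] [SeparatingDual F X] [Nontrivial X] :
    ∃ q : X →L[F] X, IsRankOneIdempotent q := by
  obtain ⟨e, he⟩ := exists_ne (0 : X)
  obtain ⟨ε, hε⟩ := SeparatingDual.exists_eq_one (R := F) he
  exact ⟨ε.smulRight e, e, ε, hε, rfl⟩

theorem isRankOneIdempotent_or_exists_fixed_pair [IsTopologicalRing F] [SeparatingDual F X]
    {q : X →L[F] X} (hq : IsIdempotentElem q) (hq0 : q ≠ 0) : IsRankOneIdempotent q ∨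
      ∃ u v, q u = u ∧ q v = v ∧ LinearIndependent F ![u, v] := by
  have fixed (y : X) : q (q y) = q y := congr($hq.eq y)
  obtain ⟨y, hy⟩ : ∃ y, q y ≠ 0 := by
    contrapose! hq0
    exact ContinuousLinearMap.ext hq0
  obtain ⟨f, hf⟩ := SeparatingDual.exists_eq_one (R := F) hy
  refine or_iff_not_imp_right.mpr fun dependent => ⟨q y, f ∘L q, by simp [fixed, hf], ?_⟩
  ext z
  obtain ⟨r, hr⟩ : ∃ r : F, r • q y = q z := by
    by_contra! h
    exact dependent ⟨q y, q z, fixed y, fixed z, (LinearIndependent.pair_iff' hy).mpr h⟩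
  simp [← hr, hf]

variable [IsTopologicalAddGroup X]

theorem lie_lie_lie_smulRight_apply (x : X →L[F] X) (f : StrongDual F X) (u v : X) :
    ⁅x, ⁅x, ⁅x, f.smulRight u⁆⁆⁆ v = f v • x (x (x u)) - (3 * f (x v)) • x (x u)
      + (3 * f (x (x v))) • x u - f (x (x (x v))) • u := by
  simp only [Ring.lie_def, sub_apply, mul_apply_eq_comp,
    ContinuousLinearMap.smulRight_apply, map_sub, map_smul]
  module

theorem lie_smulRight_apply (x : X →L[F] X) (f : StrongDual F X) (u v : X) :
    ⁅x, f.smulRight u⁆ v = f v • x u - f (x v) • u := by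
  simp [Ring.lie_def]

/-- The contragredient representation of the Lie algebra of continuous operators on `X`. -/
def negTranspose [IsTopologicalRing F] : (X →L[F] X) →ₗ⁅F⁆ Module.End F (StrongDual F X) where
  toLinearMap := LinearMap.mk₂ F (fun a φ => -(φ ∘L a))
    (fun a b φ => by ext; simp [add_comm]) (fun c a φ => by ext; simp)
    (fun a φ ψ => by ext; simp [add_comm]) (fun c a φ => by ext; simp)
  map_lie' {a b} := by ext φ x; simp [Ring.lie_def, neg_add_eq_sub]

@[simp]
theorem negTranspose_apply [IsTopologicalRing F] (a : X →L[F] X) (φ : StrongDual F X) :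
    negTranspose a φ = -(φ ∘L a) :=
  rfl

variable [IsTopologicalRing F] [SeparatingDual F X]

theorem exists_apply_apply_eq_of_lie_lie_lie [NeZero (3 : F)] {x : X →L[F] X}
    (hx : ∀ r : F, x ≠ r • 1) (h : ∀ a : X →L[F] X, ⁅x, ⁅x, ⁅x, a⁆⁆⁆ = ⁅x, a⁆) {v : X}
    (hv : LinearIndependent F ![v, x v]) : ∃ α β : F, x (x v) = α • x v + β • v := by
  suffices x (x v) ∈ Submodule.span F (Set.range ![v, x v]) by
    simpa [Submodule.mem_span_pair, eq_comm] using this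
  by_contra h_notMem
  obtain ⟨f, hf⟩ := exists_strongDual_apply_eq (hv.finCons h_notMem) ![1, 0, 0]
  have f_xxv : f (x (x v)) = 1 := hf 0
  have f_v : f v = 0 := hf 1
  have f_xv : f (x v) = 0 := hf 2
  refine hx (3⁻¹ * f (x (x (x v)))) (ContinuousLinearMap.ext fun u => ?_)
  have h_u := congr($(h (f.smulRight u)) v)
  simp only [lie_lie_lie_smulRight_apply, lie_smulRight_apply, f_v, f_xv, f_xxv, mul_zero, mul_one,
    zero_smul, sub_zero, zero_add, sub_eq_zero] at h_u
  rw [smul_apply, one_apply_eq_self, mul_smul, ← h_u, inv_smul_smul₀ three_ne_zero]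

theorem exists_quadratic_of_lie_lie_lie [NeZero (3 : F)] {x : X →L[F] X}
    (hx : ∀ r : F, x ≠ r • 1) (h : ∀ a : X →L[F] X, ⁅x, ⁅x, ⁅x, a⁆⁆⁆ = ⁅x, a⁆) :
    ∃ α β : F, (∀ u, x (x u) = α • x u + β • u) ∧ α ^ 2 + 4 * β = 1 := by
  obtain ⟨v, hv⟩ := exists_linearIndependent_pair_apply hx
  obtain ⟨α, β, xxv⟩ := exists_apply_apply_eq_of_lie_lie_lie hx h hv
  obtain ⟨f, hf⟩ := exists_strongDual_apply_eq hv ![1, 0]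
  obtain ⟨g, hg⟩ := exists_strongDual_apply_eq hv ![0, 1]
  have f_v : f v = 1 := hf 0
  have f_xv : f (x v) = 0 := hf 1
  have g_v : g v = 0 := hg 0
  have g_xv : g (x v) = 1 := hg 1
  have g_xxv : g (x (x v)) = α := by simp [xxv, g_v, g_xv]
  have g_xxxv : g (x (x (x v))) = α ^ 2 + β := by simp [xxv, g_v, g_xv, sq]
  have h_u (u : X) := congr($(h (g.smulRight u)) v)
  simp only [lie_lie_lie_smulRight_apply, lie_smulRight_apply, g_v, g_xv, g_xxv, g_xxxv, mul_one,
    zero_smul, zero_sub, one_smul] at h_u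
  have disc : α ^ 2 + 4 * β = 1 := by
    have := congrArg f (h_u v)
    simp only [xxv, map_add, map_sub, map_neg, map_smul, f_v, f_xv, smul_eq_mul] at this
    linear_combination -this
  refine ⟨α, β, fun u => ?_, disc⟩
  rw [← smul_right_inj (three_ne_zero (α := F))]
  linear_combination (norm := module) -h_u u - disc • u

theorem exists_isIdempotentElem_of_lie_lie_lie [NeZero (2 : F)] [NeZero (3 : F)] {x : X →L[F] X}
    (hx : ∀ r : F, x ≠ r • 1) (h : ∀ a : X →L[F] X, ⁅x, ⁅x, ⁅x, a⁆⁆⁆ = ⁅x, a⁆) :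
    ∃ (q : X →L[F] X) (s : F), IsIdempotentElem q ∧ x = q + s • 1 := by
  obtain ⟨α, β, quadratic, disc⟩ := exists_quadratic_of_lie_lie_lie hx h
  obtain ⟨s, rfl⟩ : ∃ s, α = 2 * s + 1 := ⟨2⁻¹ * (α - 1), by field⟩
  have four_ne_zero : (4 : F) ≠ 0 := by
    rw [show (4 : F) = 2 * 2 by norm_num]
    exact mul_ne_zero two_ne_zero two_ne_zero
  obtain rfl : β = -(s ^ 2 + s) := by
    refine mul_left_cancel₀ four_ne_zero ?_
    linear_combination disc
  refine ⟨x - s • 1, s, ContinuousLinearMap.ext fun u => ?_, (sub_add_cancel _ _).symm⟩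
  simp only [mul_apply_eq_comp, sub_apply, smul_apply, one_apply_eq_self, map_sub, map_smul,
    quadratic]
  module

theorem isRankOneIdempotent_or_isRankOneIdempotent_one_sub {q : X →L[F] X}
    (hq : IsIdempotentElem q) (hq0 : q ≠ 0) (hq1 : q ≠ 1)
    (h : ∀ n : X →L[F] X, q * n = n → n * q = 0 → ∀ a, ∃ r : F, n * a * n = r • n) :
    IsRankOneIdempotent q ∨ IsRankOneIdempotent (1 - q) := by
  refine (isRankOneIdempotent_or_exists_fixed_pair hq hq0).imp_right fun ⟨u₁, u₂, hu₁, hu₂, hu⟩ =>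
    (isRankOneIdempotent_or_exists_fixed_pair hq.one_sub
      (sub_ne_zero.mpr hq1.symm)).resolve_right ?_
  rintro ⟨v₁, v₂, hv₁, hv₂, hv⟩
  have qv₁ : q v₁ = 0 := by simpa using hv₁
  have qv₂ : q v₂ = 0 := by simpa using hv₂
  obtain ⟨f, hf⟩ := exists_strongDual_apply_eq hu ![1, 0]
  obtain ⟨g₁, hg₁⟩ := exists_strongDual_apply_eq hv ![1, 0]
  obtain ⟨g₂, hg₂⟩ := exists_strongDual_apply_eq hv ![0, 1]
  simp only [Fin.forall_fin_two, Matrix.cons_val_zero, Matrix.cons_val_one] at hf hg₁ hg₂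
  obtain ⟨r, hr⟩ := h ((g₁.smulRight u₁ + g₂.smulRight u₂) * (1 - q))
    (by ext y; simp [hu₁, hu₂]) (by rw [mul_assoc, sub_mul, one_mul, hq.eq, sub_self, mul_zero])
    (f.smulRight v₁)
  have at_v₁ : u₁ = r • u₁ := by simpa [qv₁, hf, hg₁, hg₂] using congr($hr v₁)
  have at_v₂ : 0 = r • u₂ := by simpa [qv₂, hf, hg₁, hg₂] using congr($hr v₂)
  have r_eq_zero : r = 0 := (smul_eq_zero_iff_left (hu.ne_zero 1)).mp at_v₂.symm
  exact hu.ne_zero 0 (by simpa [r_eq_zero] using at_v₁)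

end Operators

namespace ColumnRep

variable {F L V X Y : Type*} [Field F] [TopologicalSpace F] [LieRing L] [LieAlgebra F L] {p : L}
  [AddCommGroup V] [Module F V]
  [AddCommGroup X] [Module F X] [TopologicalSpace X] [IsTopologicalAddGroup X] [ContinuousSMul F X]
  [AddCommGroup Y] [Module F Y] [TopologicalSpace Y] [IsTopologicalAddGroup Y] [ContinuousSMul F Y]

/-- The column representation on `Y` given by an isomorphism with the Lie algebra of continuous
operators on `Y`. -/
def ofLieEquiv (l : L ≃ₗ⁅F⁆ (Y →L[F] Y)) {e : Y} {ε : StrongDual F Y} {s : F}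
    (hε : ε e = 1) (hp : l p = ε.smulRight e + s • 1) : ColumnRep F p Y where
  toEnd :=
    { toLinearMap := ContinuousLinearMap.coeLM F ∘ₗ (l : L →ₗ[F] Y →L[F] Y)
      map_lie' := fun {a b} => congrArg ContinuousLinearMap.toLinearMap (l.map_lie a b) }
  injective := ContinuousLinearMap.coe_injective.comp l.injective
  vec := e
  form := ε
  form_vec := hε
  exists_toEnd_self := ⟨s, fun y => congr($hp y)⟩
  column := (l.symm : (Y →L[F] Y) →ₗ[F] L) ∘ₗ ContinuousLinearMap.smulRightₗ ε
  toEnd_column x y := congr($(l.apply_symm_apply (ε.smulRight x)) y)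

theorem ofLieEquiv_toEnd_apply (l : L ≃ₗ⁅F⁆ (Y →L[F] Y)) {e : Y} {ε : StrongDual F Y}
    {s : F} (hε : ε e = 1) (hp : l p = ε.smulRight e + s • 1) (a : L) (y : Y) :
    (ofLieEquiv l hε hp).toEnd a y = l a y :=
  rfl

/-- The column representation of the continuous operators on `X` on `X` itself. -/
def standard {e : X} {ε : StrongDual F X} (hε : ε e = 1) : ColumnRep F (ε.smulRight e) X :=
  ofLieEquiv .refl (s := 0) hε (by simp)

@[simp]
theorem standard_toEnd_apply {e : X} {ε : StrongDual F X} (hε : ε e = 1) (a : X →L[F] X) (x : X) :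
    (standard hε).toEnd a x = a x :=
  rfl

/-- `negTranspose` as a column representation. -/
def dual [IsTopologicalRing F] [SeparatingDual F X] {e : X} {ε : StrongDual F X} (hε : ε e = 1) :
    ColumnRep F (-ε.smulRight e) (StrongDual F X) where
  toEnd := negTranspose
  injective a b h := by
    ext x
    refine (SeparatingDual.eq_iff_forall_dual_eq (R := F)).mpr fun φ => ?_
    simpa using congr($h φ x)
  vec := ε
  form :=
    { toFun φ := φ e
      map_add' _ _ := rfl
      map_smul' _ _ := rfl }
  form_vec := hε
  exists_toEnd_self := ⟨0, fun φ => by ext; simp [mul_comm]⟩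
  column :=
    { toFun φ := -φ.smulRight e
      map_add' _ _ := by ext; simp [add_smul, add_comm]
      map_smul' _ _ := by ext; simp [mul_smul] }
  toEnd_column φ ψ := by ext; simp [mul_comm]

@[simp]
theorem dual_toEnd [IsTopologicalRing F] [SeparatingDual F X] {e : X} {ε : StrongDual F X}
    (hε : ε e = 1) : (dual hε).toEnd = negTranspose :=
  rfl

theorem exists_intertwined_add_scalar [NeZero (2 : F)] (A : ColumnRep F p V) {u : L}
    (hu : A.toEnd u = 1) (l : L ≃ₗ⁅F⁆ (Y →L[F] Y)) {q : Y →L[F] Y} {s : F} (hp : l p = q + s • 1)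
    (hq : IsRankOneIdempotent q) :
    ∃ (m nm : L →ₗ[F] Y →L[F] Y) (T : V ≃ₗ[F] Y), (∀ a, l a = m a + nm a) ∧
      Function.Bijective m ∧ (∀ a x, m a (T x) = T (A.toEnd a x)) ∧
      (∀ a, ∃ r : F, nm a = r • 1) ∧ ∀ a b : L, nm ⁅a, b⁆ = 0 := by
  obtain ⟨e, ε, hε, rfl⟩ := hq
  let B := ofLieEquiv l hε hp
  let T := A.transferEquiv B
  let nm : L →ₗ[F] Y →L[F] Y := (A.twist B).smulRight 1
  let m : L →ₗ[F] Y →L[F] Y := (l : L →ₗ[F] Y →L[F] Y) - nm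
  have nm_apply (a : L) : nm a = A.twist B a • 1 := rfl
  have m_apply (a : L) : m a = l a - nm a := rfl
  have intertwined (a : L) (x : V) : m a (T x) = T (A.toEnd a x) := by
    rw [m_apply, nm_apply, sub_apply, smul_apply, one_apply_eq_self, sub_eq_iff_eq_add,
      ← ofLieEquiv_toEnd_apply l hε hp]
    exact A.toEnd_transfer B a x
  have m_u : m u = 1 :=
    ContinuousLinearMap.ext (T.surjective.forall.mpr fun x => by simp [intertwined, hu])
  refine ⟨m, nm, T, fun a => by rw [m_apply, sub_add_cancel], ⟨?_, fun b => ?_⟩, intertwined,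
    fun a => ⟨_, nm_apply a⟩, fun a b => by rw [nm_apply, A.twist_lie, zero_smul]⟩
  · refine (injective_iff_map_eq_zero m).mpr fun a ha => A.eq_of_toEnd_apply_eq fun x => ?_
    refine T.injective ?_
    rw [← intertwined, ha, zero_apply, map_zero, LinearMap.zero_apply, map_zero]
  · obtain ⟨a, rfl⟩ : ∃ a, l a = b := EquivLike.surjective l b
    exact ⟨a + A.twist B a • u, by rw [map_add, map_smul, m_u, m_apply, nm_apply, sub_add_cancel]⟩

end ColumnRep

section LieEquiv

variable {F L V X Y : Type*} [Field F] [TopologicalSpace F] [IsTopologicalRing F]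
  [AddCommGroup X] [Module F X] [TopologicalSpace X] [IsTopologicalAddGroup X] [ContinuousSMul F X]
  [AddCommGroup Y] [Module F Y] [TopologicalSpace Y] [IsTopologicalAddGroup Y] [ContinuousSMul F Y]

theorem exists_eq_smul_one_of_lieEquiv_eq_smul_one {R : Type*} [Ring R] [Algebra F R]
    [SeparatingDual F X] (l : (X →L[F] X) ≃ₗ⁅F⁆ R) {p : X →L[F] X} {r : F} (hr : l p = r • 1) :
    ∃ t : F, p = t • 1 := by
  have central : p ∈ Subalgebra.center F (X →L[F] X) := by
    refine Subalgebra.mem_center_iff.mpr fun b => (sub_eq_zero.mp ?_).symm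
    refine EquivLike.injective l ?_
    rw [← Ring.lie_def, LieEquiv.map_lie, hr, map_zero]
    simp [Ring.lie_def]
  obtain ⟨t, ht⟩ := Algebra.IsCentral.out central
  exact ⟨t, by rw [← Algebra.algebraMap_eq_smul_one, ← ht]; rfl⟩

theorem exists_isRankOneIdempotent_of_eq_smul_one [SeparatingDual F X] [SeparatingDual F Y]
    (l : (X →L[F] X) ≃ₗ⁅F⁆ (Y →L[F] Y)) {p : X →L[F] X} (hp : IsRankOneIdempotent p) {r : F}
    (hr : l p = r • 1) :
    ∃ (q : Y →L[F] Y) (s : F), l p = q + s • 1 ∧ IsRankOneIdempotent q := by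
  obtain ⟨t, ht⟩ := exists_eq_smul_one_of_lieEquiv_eq_smul_one l hr
  obtain rfl := hp.eq_one_of_eq_smul_one ht
  have scalar (b : Y →L[F] Y) : ∃ c : F, b = c • 1 := by
    obtain ⟨a, rfl⟩ : ∃ a, l a = b := EquivLike.surjective l b
    obtain ⟨c, rfl⟩ := hp.exists_eq_smul_one a
    exact ⟨c * r, by rw [map_smul, hr, mul_smul]⟩
  have : Nontrivial Y := by
    by_contra! h
    have one_eq_zero : (1 : X →L[F] X) = 0 := EquivLike.injective l (Subsingleton.elim _ _)
    obtain ⟨e, ε, hε, -⟩ := hp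
    have e_eq_zero : e = 0 := congr($one_eq_zero e)
    simp [e_eq_zero] at hε
  obtain ⟨q, hq⟩ := exists_isRankOneIdempotent (F := F) (X := Y)
  obtain ⟨c, hc⟩ := scalar q
  refine ⟨q, r - 1, ?_, hq⟩
  rw [hq.eq_one_of_eq_smul_one hc, hr]
  module

variable [LieRing L] [LieAlgebra F L] {p : L} [AddCommGroup V] [Module F V] [NeZero (2 : F)]

theorem exists_isRankOneIdempotent_of_ne_smul_one [NeZero (3 : F)] [SeparatingDual F Y]
    (A : ColumnRep F p V) (l : L ≃ₗ⁅F⁆ (Y →L[F] Y)) (hp : ∀ r : F, l p ≠ r • 1) :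
    ∃ (q : Y →L[F] Y) (s : F), l p = q + s • 1 ∧
      (IsRankOneIdempotent q ∨ IsRankOneIdempotent (1 - q)) := by
  have cube (a : Y →L[F] Y) : ⁅l p, ⁅l p, ⁅l p, a⁆⁆⁆ = ⁅l p, a⁆ := by
    obtain ⟨b, rfl⟩ := EquivLike.surjective l a
    simp only [← LieEquiv.map_lie, A.lie_lie_lie]
  obtain ⟨q, s, hq, lp_eq⟩ := exists_isIdempotentElem_of_lie_lie_lie hp cube
  refine ⟨q, s, lp_eq, isRankOneIdempotent_or_isRankOneIdempotent_one_sub hq ?_ ?_ ?_⟩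
  · rintro rfl
    exact hp s (by rw [lp_eq, zero_add])
  · rintro rfl
    exact hp (1 + s) (by rw [lp_eq, add_smul, one_smul])
  · intro n qn nq
    refine A.exists_mul_mul_eq_smul_of_lieEquiv l ?_ ?_
    · simp [lp_eq, Ring.lie_def, add_mul, mul_add, qn, nq]
    · rw [← qn, mul_assoc, ← mul_assoc n, nq, zero_mul, mul_zero]

theorem exists_isRankOneIdempotent_of_lieEquiv [NeZero (3 : F)] [SeparatingDual F X]
    [SeparatingDual F Y] (l : (X →L[F] X) ≃ₗ⁅F⁆ (Y →L[F] Y)) {p : X →L[F] X}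
    (hp : IsRankOneIdempotent p) : ∃ (q : Y →L[F] Y) (s : F), l p = q + s • 1 ∧
      (IsRankOneIdempotent q ∨ IsRankOneIdempotent (1 - q)) := by
  by_cases scalar : ∃ r : F, l p = r • 1
  · obtain ⟨r, hr⟩ := scalar
    obtain ⟨q, s, hq⟩ := exists_isRankOneIdempotent_of_eq_smul_one l hp hr
    exact ⟨q, s, hq.1, .inl hq.2⟩
  · push Not at scalar
    obtain ⟨e, ε, hε, rfl⟩ := hp
    exact exists_isRankOneIdempotent_of_ne_smul_one (.standard hε) l scalar

end LieEquiv

theorem stmt19_general {F X Y : Type*} [Field F] [TopologicalSpace F] [IsTopologicalRing F]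
    [NeZero (2 : F)] [NeZero (3 : F)] [AddCommGroup X] [Module F X] [TopologicalSpace X]
    [IsTopologicalAddGroup X] [ContinuousSMul F X] [SeparatingDual F X] [AddCommGroup Y]
    [Module F Y] [TopologicalSpace Y] [IsTopologicalAddGroup Y] [ContinuousSMul F Y]
    [SeparatingDual F Y]
    (l : (X →L[F] X) ≃ₗ⁅F⁆ (Y →L[F] Y)) :
    ∃ m nm : (X →L[F] X) →ₗ[F] (Y →L[F] Y),
      (∀ x, l x = m x + nm x) ∧
      Function.Bijective m ∧
      ((∀ x y, m (x * y) = m x * m y) ∨ (∀ x y, m (x * y) = -(m y * m x))) ∧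
      (∀ x, ∃ r : F, nm x = r • 1) ∧
      (∀ x y : X →L[F] X, nm ⁅x, y⁆ = 0) := by
  rcases subsingleton_or_nontrivial X with _ | _
  · refine ⟨l, 0, by simp, EquivLike.bijective l, .inl fun x y => ?_, fun _ => ⟨0, by simp⟩,
      by simp⟩
    exact EquivLike.injective l.symm (Subsingleton.elim _ _)
  obtain ⟨p, hp⟩ := exists_isRankOneIdempotent (F := F) (X := X)
  obtain ⟨q, s, lp_eq, hq⟩ := exists_isRankOneIdempotent_of_lieEquiv l hp
  obtain ⟨e, ε, hε, rfl⟩ := hp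
  rcases hq with hq | hq
  · obtain ⟨m, nm, T, l_eq, bij, hT, scalar, nm_lie⟩ :=
      (ColumnRep.standard hε).exists_intertwined_add_scalar (u := 1) rfl l lp_eq hq
    refine ⟨m, nm, l_eq, bij, .inl fun x y => ?_, scalar, nm_lie⟩
    refine ContinuousLinearMap.ext (T.surjective.forall.mpr fun v => ?_)
    simp [hT]
  · have neg_lp_eq : l (-ε.smulRight e) = (1 - q) + (-1 - s) • 1 := by
      rw [map_neg, lp_eq]
      module
    obtain ⟨m, nm, T, l_eq, bij, hT, scalar, nm_lie⟩ :=
      (ColumnRep.dual hε).exists_intertwined_add_scalar (u := -1) (by ext; simp) l neg_lp_eq hq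
    refine ⟨m, nm, l_eq, bij, .inr fun x y => ?_, scalar, nm_lie⟩
    refine ContinuousLinearMap.ext (T.surjective.forall.mpr fun φ => ?_)
    rw [neg_apply, mul_apply_eq_comp, hT, hT, hT, ← map_neg]
    congr 1
    ext v
    simp

/-- **Corollary 4.10.**  Let `X` be a Banach space over the real or complex field
`F` and let `B(X)` be the algebra of all bounded linear operators on `X`.  Then
every Lie isomorphism `l : B(X) → B(X)` has the standard form `l = m + n`, where `m`
is an algebra isomorphism or the negative of an algebra anti-isomorphism of `B(X)`
and `n : B(X) → F·I` is a linear map vanishing on each commutator. -/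
theorem stmt19 (F X : Type*) [RCLike F] [NormedAddCommGroup X] [NormedSpace F X]
    [CompleteSpace X]
    (l : (X →L[F] X) ≃ₗ[F] (X →L[F] X))
    (hLie : ∀ x y : X →L[F] X, l (x * y - y * x) = l x * l y - l y * l x) :
    ∃ m nm : (X →L[F] X) →ₗ[F] (X →L[F] X),
      (∀ x : X →L[F] X, l x = m x + nm x) ∧
      Function.Bijective m ∧
      ((∀ x y : X →L[F] X, m (x * y) = m x * m y) ∨
        (∀ x y : X →L[F] X, m (x * y) = -(m y * m x))) ∧
      (∀ x : X →L[F] X, ∃ r : F, nm x = r • (1 : X →L[F] X)) ∧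
      (∀ x y : X →L[F] X, nm (x * y - y * x) = 0) :=
  stmt19_general { l with map_lie' := hLie _ _ }
end
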